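/- arXiv:1909.06193 — 2 statements merged into one kernel-verified Lean document; each statement's English description precedes it below -/
import Mathlib

section
/- Let Z_k = (X_k,Y_k), k = 1,…,n, be random variables with values in [0,1]^d × [0,1]^d such that X_k and Y_k have the same distribution for every k. Let 𝒜_k be the σ-algebra generated by Z_k, and set α(ℓ) = sup_{|j−k| ≥ ℓ} α(𝒜_j,𝒜_k) for ℓ ≥ 1. Then for every ξ ∈ ℝ^d, E( | (1/n) Σ_{k=1}^n e^{i⟨ξ,X_k⟩} − (1/n) Σ_{k=1}^n e^{i⟨ξ,Y_k⟩} |² ) ≤ 4/n + (128/n) Σ_{ℓ=1}^{n−1} α(ℓ). -/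
open MeasureTheory ProbabilityTheory

noncomputable section

/-- The Rosenblatt mixing coefficient `α(𝒜₁, 𝒜₂)` of two sub-σ-algebras. -/
def rosenblattAlpha {Ω : Type*} [MeasurableSpace Ω] (P : Measure Ω)
    (m1 m2 : MeasurableSpace Ω) : ℝ :=
  sSup {r | ∃ A B : Set Ω, MeasurableSet[m1] A ∧ MeasurableSet[m2] B ∧
    r = |(P (A ∩ B)).toReal - (P A).toReal * (P B).toReal|}

/-- The mixing sequence `α(ℓ) = sup_{|j−k| ≥ ℓ} α(σ(Z_j), σ(Z_k))` of a finite
family of random variables. -/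
def mixingSeq {Ω : Type*} [MeasurableSpace Ω] (P : Measure Ω) {n : ℕ}
    {E : Type*} [MeasurableSpace E] (Z : Fin n → Ω → E) (ℓ : ℕ) : ℝ :=
  sSup {r | ∃ j k : Fin n, ℓ ≤ Nat.dist (j : ℕ) (k : ℕ) ∧
    r = rosenblattAlpha P (MeasurableSpace.comap (Z j) inferInstance)
          (MeasurableSpace.comap (Z k) inferInstance)}

/-!
Write `W k = f (X k) - f (Y k)`, where `f x = exp (i⟨ξ, x⟩)` has norm `1`. Equality of
the laws makes `W k` centred, so expanding the square gives `n` diagonal terms, each at most `4`,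
and off-diagonal covariances of the real and imaginary parts. Hoeffding's identity
`cov[U, V] = ∫ s in a..b, cov[𝟙_{s < U}, V]` for `a ≤ U ≤ b`, applied in both arguments, reduces the
covariance of bounded variables to that of indicators, which is what `α` controls: it is at most the
product of the two oscillations times `α`, here `4 * 4 * α`. Each distance `ℓ ≥ 1` from a given
index is attained at most twice, so the off-diagonal terms contribute at most
`n * 2 * (16 + 16) * ∑ α(ℓ)`.
-/

section Covariance

variable {Ω : Type*} {mΩ : MeasurableSpace Ω} {P : Measure Ω}

lemma setIntegral_Ioc_indicator_Iio_const {a b t : ℝ} (ht : t ∈ Set.Icc a b) (c : ℝ) :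
    ∫ s in Set.Ioc a b, (Set.Iio t).indicator (fun _ ↦ c) s = (t - a) * c := by
  have hinter : Set.Ioc a b ∩ Set.Iio t = Set.Ioo a t :=
    Set.ext fun s ↦ ⟨fun h ↦ ⟨h.1.1, h.2⟩, fun h ↦ ⟨⟨h.1, h.2.le.trans ht.2⟩, h.2⟩⟩
  rw [setIntegral_indicator measurableSet_Iio, hinter, setIntegral_const,
    Real.volume_real_Ioo_of_le ht.1, smul_eq_mul]

lemma integral_sub_const_mul_eq_integral_superlevel [SFinite P] {f g : Ω → ℝ} {a b : ℝ}
    (hf : Measurable f) (hfab : ∀ᵐ ω ∂P, f ω ∈ Set.Icc a b) (hg : Integrable g P) :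
    ∫ ω, (f ω - a) * g ω ∂P = ∫ s in Set.Ioc a b, ∫ ω in {ω | s < f ω}, g ω ∂P := by
  have hmeas : MeasurableSet {p : Ω × ℝ | p.2 < f p.1} :=
    measurableSet_lt measurable_snd (hf.comp measurable_fst)
  have hint : Integrable ({p : Ω × ℝ | p.2 < f p.1}.indicator fun p ↦ g p.1)
      (P.prod (volume.restrict (Set.Ioc a b))) := (hg.comp_fst _).indicator hmeas
  calc ∫ ω, (f ω - a) * g ω ∂P
      = ∫ ω, (∫ s in Set.Ioc a b, (Set.Iio (f ω)).indicator (fun _ ↦ g ω) s) ∂P :=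
        integral_congr_ae <| hfab.mono fun ω hω ↦
          (setIntegral_Ioc_indicator_Iio_const hω (g ω)).symm
    _ = ∫ s in Set.Ioc a b, ∫ ω, {ω | s < f ω}.indicator g ω ∂P :=
        integral_integral_swap (f := fun ω s ↦ (Set.Iio (f ω)).indicator (fun _ ↦ g ω) s) hint
    _ = ∫ s in Set.Ioc a b, ∫ ω in {ω | s < f ω}, g ω ∂P := by
        simp_rw [integral_indicator (measurableSet_lt measurable_const hf)]

lemma integral_norm_sq_eq_variance_re_add_variance_im [IsFiniteMeasure P] {W : Ω → ℂ}
    (hW : MemLp W 2 P) (hW0 : P[W] = 0) :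
    ∫ ω, ‖W ω‖ ^ 2 ∂P = Var[fun ω ↦ (W ω).re; P] + Var[fun ω ↦ (W ω).im; P] := by
  have hW_int : Integrable W P := hW.integrable one_le_two
  have hre0 : ∫ ω, (W ω).re ∂P = 0 := (integral_re hW_int).trans (by simp [hW0])
  have him0 : ∫ ω, (W ω).im ∂P = 0 := (integral_im hW_int).trans (by simp [hW0])
  have hre_memLp : MemLp (fun ω ↦ (W ω).re) 2 P := hW.re
  have him_memLp : MemLp (fun ω ↦ (W ω).im) 2 P := hW.im
  rw [variance_of_integral_eq_zero hre_memLp.aemeasurable hre0,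
    variance_of_integral_eq_zero him_memLp.aemeasurable him0,
    ← integral_add hre_memLp.integrable_sq him_memLp.integrable_sq]
  simp only [Complex.sq_norm, Complex.normSq_apply, sq (Complex.re _), sq (Complex.im _)]

variable [IsProbabilityMeasure P]

lemma covariance_eq_integral_mul_sub_integral {f g : Ω → ℝ} (hf : MemLp f 2 P)
    (hg : MemLp g 2 P) : cov[f, g; P] = ∫ ω, f ω * (g ω - P[g]) ∂P := by
  have hg_int : Integrable g P := hg.integrable one_le_two
  have hcentred : ∫ ω, (g ω - P[g]) ∂P = 0 := by
    simp [integral_sub hg_int (integrable_const _)]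
  rw [← covariance_sub_const_right hg_int P[g],
    covariance_eq_sub (Y := fun ω ↦ g ω - P[g]) hf (hg.sub (memLp_const _)), hcentred, mul_zero,
    sub_zero]
  rfl

lemma covariance_indicator_one_left {A : Set Ω} (hA : MeasurableSet A) {g : Ω → ℝ}
    (hg : MemLp g 2 P) : cov[A.indicator 1, g; P] = ∫ ω in A, (g ω - P[g]) ∂P := by
  have hA_memLp : MemLp (A.indicator (1 : Ω → ℝ)) 2 P := (memLp_const 1).indicator hA
  rw [covariance_eq_integral_mul_sub_integral hA_memLp hg, ← integral_indicator hA]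
  exact integral_congr_ae (.of_forall fun ω ↦ by by_cases hω : ω ∈ A <;> simp [hω])

lemma covariance_indicator_one_indicator_one {A B : Set Ω} (hA : MeasurableSet A)
    (hB : MeasurableSet B) :
    cov[A.indicator 1, B.indicator 1; P] = P.real (A ∩ B) - P.real A * P.real B := by
  have memLp_indicator {S : Set Ω} (hS : MeasurableSet S) :
      MemLp (S.indicator (1 : Ω → ℝ)) 2 P := (memLp_const 1).indicator hS
  rw [covariance_eq_sub (memLp_indicator hA) (memLp_indicator hB), ← Set.inter_indicator_one,
    integral_indicator_one (hA.inter hB), integral_indicator_one hA, integral_indicator_one hB]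

lemma covariance_eq_integral_covariance_superlevel {f g : Ω → ℝ} {a b : ℝ} (hf : Measurable f)
    (hfab : ∀ᵐ ω ∂P, f ω ∈ Set.Icc a b) (hg : MemLp g 2 P) :
    cov[f, g; P] = ∫ s in Set.Ioc a b, cov[{ω | s < f ω}.indicator 1, g; P] := by
  have hf_memLp : MemLp f 2 P := memLp_of_bounded hfab hf.aestronglyMeasurable 2
  have hg_int : Integrable g P := hg.integrable one_le_two
  rw [← covariance_sub_const_left (hf_memLp.integrable one_le_two) a,
    covariance_eq_integral_mul_sub_integral (f := fun ω ↦ f ω - a)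
      (hf_memLp.sub (memLp_const a)) hg]
  simp_rw [covariance_indicator_one_left (measurableSet_lt measurable_const hf) hg]
  exact integral_sub_const_mul_eq_integral_superlevel hf hfab (hg_int.sub (integrable_const _))

lemma abs_covariance_le_of_superlevel {f g : Ω → ℝ} {a b c : ℝ} (hf : Measurable f)
    (hfab : ∀ᵐ ω ∂P, f ω ∈ Set.Icc a b) (hg : MemLp g 2 P)
    (hc : ∀ s, |cov[{ω | s < f ω}.indicator 1, g; P]| ≤ c) :
    |cov[f, g; P]| ≤ (b - a) * c := by
  obtain ⟨ω, hω⟩ := hfab.exists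
  rw [covariance_eq_integral_covariance_superlevel hf hfab hg, mul_comm,
    ← Real.volume_real_Ioc_of_le (hω.1.trans hω.2), ← Real.norm_eq_abs]
  exact norm_setIntegral_le_of_norm_le_const measure_Ioc_lt_top fun s _ ↦ hc s

end Covariance

section RosenblattAlpha

variable {Ω : Type*} {m₁ m₂ m₁' m₂' mΩ : MeasurableSpace Ω} {P : Measure Ω}

lemma rosenblattAlpha_nonneg : 0 ≤ rosenblattAlpha P m₁ m₂ := by
  refine Real.sSup_nonneg ?_
  rintro _ ⟨A, B, -, -, rfl⟩
  exact abs_nonneg _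

variable [IsProbabilityMeasure P]

lemma abs_measure_inter_sub_le_rosenblattAlpha {A B : Set Ω} (hA : MeasurableSet[m₁] A)
    (hB : MeasurableSet[m₂] B) :
    |P.real (A ∩ B) - P.real A * P.real B| ≤ rosenblattAlpha P m₁ m₂ := by
  refine le_csSup ⟨1, ?_⟩ ⟨A, B, hA, hB, rfl⟩
  rintro _ ⟨S, T, -, -, rfl⟩
  exact abs_sub_le_of_nonneg_of_le measureReal_nonneg measureReal_le_one
    (mul_nonneg measureReal_nonneg measureReal_nonneg)
    (mul_le_one₀ measureReal_le_one measureReal_nonneg measureReal_le_one)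

lemma rosenblattAlpha_mono (h₁ : m₁ ≤ m₁') (h₂ : m₂ ≤ m₂') :
    rosenblattAlpha P m₁ m₂ ≤ rosenblattAlpha P m₁' m₂' := by
  refine Real.sSup_le ?_ rosenblattAlpha_nonneg
  rintro _ ⟨A, B, hA, hB, rfl⟩
  exact abs_measure_inter_sub_le_rosenblattAlpha (h₁ A hA) (h₂ B hB)

lemma abs_covariance_le_mul_rosenblattAlpha (hm₁ : m₁ ≤ mΩ) (hm₂ : m₂ ≤ mΩ) {f g : Ω → ℝ}
    {a b c d : ℝ} (hf : Measurable[m₁] f) (hg : Measurable[m₂] g)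
    (hfab : ∀ᵐ ω ∂P, f ω ∈ Set.Icc a b) (hgcd : ∀ᵐ ω ∂P, g ω ∈ Set.Icc c d) :
    |cov[f, g; P]| ≤ (b - a) * ((d - c) * rosenblattAlpha P m₁ m₂) := by
  have hf' : Measurable f := hf.mono hm₁ le_rfl
  have hg' : Measurable g := hg.mono hm₂ le_rfl
  have hg_memLp : MemLp g 2 P := memLp_of_bounded hgcd hg'.aestronglyMeasurable 2
  refine abs_covariance_le_of_superlevel hf' hfab hg_memLp fun s ↦ ?_
  have hA : MeasurableSet[m₁] {ω | s < f ω} := hf measurableSet_Ioi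
  rw [covariance_comm]
  refine abs_covariance_le_of_superlevel hg' hgcd ((memLp_const 1).indicator (hm₁ _ hA))
    fun t ↦ ?_
  have hB : MeasurableSet[m₂] {ω | t < g ω} := hg measurableSet_Ioi
  rw [covariance_comm, covariance_indicator_one_indicator_one (hm₁ _ hA) (hm₂ _ hB)]
  exact abs_measure_inter_sub_le_rosenblattAlpha hA hB

end RosenblattAlpha

section MixingSeq

variable {Ω : Type*} {mΩ : MeasurableSpace Ω} {P : Measure Ω} {n : ℕ}
  {E F : Type*} [MeasurableSpace E] [MeasurableSpace F]

lemma mixingSeq_nonneg (Z : Fin n → Ω → E) (ℓ : ℕ) : 0 ≤ mixingSeq P Z ℓ := by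
  refine Real.sSup_nonneg ?_
  rintro _ ⟨j, k, -, rfl⟩
  exact rosenblattAlpha_nonneg

lemma rosenblattAlpha_comap_le_mixingSeq (Z : Fin n → Ω → E) {j k : Fin n} {ℓ : ℕ}
    (hℓ : ℓ ≤ Nat.dist j k) :
    rosenblattAlpha P (.comap (Z j) inferInstance) (.comap (Z k) inferInstance)
      ≤ mixingSeq P Z ℓ := by
  refine le_csSup (Set.Finite.bddAbove ?_) ⟨j, k, hℓ, rfl⟩
  refine (Set.finite_range fun p : Fin n × Fin n ↦ rosenblattAlpha P
    (.comap (Z p.1) inferInstance) (.comap (Z p.2) inferInstance)).subset ?_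
  rintro _ ⟨j, k, -, rfl⟩
  exact ⟨(j, k), rfl⟩

variable [IsProbabilityMeasure P]

lemma mixingSeq_comp_le (Z : Fin n → Ω → E) {φ : E → F} (hφ : Measurable φ) (ℓ : ℕ) :
    mixingSeq P (fun k ω ↦ φ (Z k ω)) ℓ ≤ mixingSeq P Z ℓ := by
  have comap_comp_le (k : Fin n) : MeasurableSpace.comap (fun ω ↦ φ (Z k ω)) inferInstance
      ≤ MeasurableSpace.comap (Z k) inferInstance :=
    (hφ.comp (comap_measurable (Z k))).comap_le
  refine Real.sSup_le ?_ (mixingSeq_nonneg Z ℓ)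
  rintro _ ⟨j, k, hjk, rfl⟩
  exact (rosenblattAlpha_mono (comap_comp_le j) (comap_comp_le k)).trans
    (rosenblattAlpha_comap_le_mixingSeq Z hjk)

lemma covariance_le_mul_mixingSeq {T : Fin n → Ω → ℝ} (hT : ∀ k, Measurable (T k)) {a b : ℝ}
    (hTab : ∀ k, ∀ᵐ ω ∂P, T k ω ∈ Set.Icc a b) (j k : Fin n) :
    cov[T j, T k; P] ≤ (b - a) ^ 2 * mixingSeq P T (Nat.dist j k) :=
  calc cov[T j, T k; P]
    _ ≤ (b - a) * ((b - a) * rosenblattAlpha P (.comap (T j) inferInstance)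
          (.comap (T k) inferInstance)) :=
        (le_abs_self _).trans <| abs_covariance_le_mul_rosenblattAlpha (hT j).comap_le
          (hT k).comap_le (comap_measurable _) (comap_measurable _) (hTab j) (hTab k)
    _ = (b - a) ^ 2 * rosenblattAlpha P (.comap (T j) inferInstance)
          (.comap (T k) inferInstance) := by ring
    _ ≤ (b - a) ^ 2 * mixingSeq P T (Nat.dist j k) := by
        gcongr
        exact rosenblattAlpha_comap_le_mixingSeq T le_rfl

end MixingSeq

section DistSum

variable {n : ℕ}

lemma card_filter_dist_eq_le_two (j : Fin n) (ℓ : ℕ) :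
    (Finset.univ.filter fun k : Fin n ↦ Nat.dist j k = ℓ).card ≤ 2 := by
  refine (Finset.card_le_card_of_injOn (t := {(j : ℕ) + ℓ, (j : ℕ) - ℓ}) Fin.val ?_
    Fin.val_injective.injOn).trans Finset.card_le_two
  intro k hk
  have hdist : Nat.dist j k = ℓ := by simpa using hk
  simp only [Nat.dist, Finset.coe_pair, Set.mem_insert_iff, Set.mem_singleton_iff] at hdist ⊢
  omega

lemma sum_erase_dist_le_two_nsmul_sum {M : Type*} [AddCommMonoid M] [PartialOrder M]
    [IsOrderedAddMonoid M] {c : ℕ → M} (hc : ∀ ℓ, 0 ≤ c ℓ) (j : Fin n) :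
    ∑ k ∈ Finset.univ.erase j, c (Nat.dist j k) ≤ 2 • ∑ ℓ ∈ Finset.Icc 1 (n - 1), c ℓ := by
  have hmaps : ∀ k ∈ Finset.univ.erase j, Nat.dist j k ∈ Finset.Icc 1 (n - 1) := by
    intro k hk
    have hkj : (k : ℕ) ≠ j := Fin.val_ne_of_ne (Finset.ne_of_mem_erase hk)
    simp only [Finset.mem_Icc, Nat.dist]
    omega
  rw [← Finset.sum_fiberwise_of_maps_to' hmaps, Finset.smul_sum]
  refine Finset.sum_le_sum fun ℓ _ ↦ ?_
  rw [Finset.sum_const]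
  refine nsmul_le_nsmul_left (hc ℓ) ((Finset.card_le_card ?_).trans
    (card_filter_dist_eq_le_two j ℓ))
  exact Finset.filter_subset_filter _ (Finset.erase_subset _ _)

end DistSum

section SecondMoment

variable {Ω : Type*} {mΩ : MeasurableSpace Ω} {P : Measure Ω} [IsProbabilityMeasure P] {n : ℕ}

lemma variance_sum_le_sum_variance_add_mixing {T : Fin n → Ω → ℝ} (hT : ∀ k, Measurable (T k))
    {a b : ℝ} (hTab : ∀ k, ∀ᵐ ω ∂P, T k ω ∈ Set.Icc a b) :
    Var[fun ω ↦ ∑ k, T k ω; P] ≤ ∑ k, Var[T k; P]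
      + n * (2 * (b - a) ^ 2 * ∑ ℓ ∈ Finset.Icc 1 (n - 1), mixingSeq P T ℓ) := by
  have hrow (j : Fin n) : ∑ k, cov[T j, T k; P] ≤ Var[T j; P]
      + 2 * (b - a) ^ 2 * ∑ ℓ ∈ Finset.Icc 1 (n - 1), mixingSeq P T ℓ := by
    rw [← Finset.add_sum_erase _ _ (Finset.mem_univ j), covariance_self (hT j).aemeasurable]
    gcongr
    calc ∑ k ∈ Finset.univ.erase j, cov[T j, T k; P]
      _ ≤ ∑ k ∈ Finset.univ.erase j, (b - a) ^ 2 * mixingSeq P T (Nat.dist j k) :=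
          Finset.sum_le_sum fun k _ ↦ covariance_le_mul_mixingSeq hT hTab j k
      _ = (b - a) ^ 2 * ∑ k ∈ Finset.univ.erase j, mixingSeq P T (Nat.dist j k) :=
          (Finset.mul_sum ..).symm
      _ ≤ (b - a) ^ 2 * 2 • ∑ ℓ ∈ Finset.Icc 1 (n - 1), mixingSeq P T ℓ := by
          gcongr
          exact sum_erase_dist_le_two_nsmul_sum (mixingSeq_nonneg T) j
      _ = 2 * (b - a) ^ 2 * ∑ ℓ ∈ Finset.Icc 1 (n - 1), mixingSeq P T ℓ := by ring
  rw [variance_fun_sum fun k ↦ memLp_of_bounded (hTab k) (hT k).aestronglyMeasurable 2]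
  calc ∑ j, ∑ k, cov[T j, T k; P]
    _ ≤ ∑ j, (Var[T j; P]
          + 2 * (b - a) ^ 2 * ∑ ℓ ∈ Finset.Icc 1 (n - 1), mixingSeq P T ℓ) :=
        Finset.sum_le_sum fun j _ ↦ hrow j
    _ = _ := by rw [Finset.sum_add_distrib, Finset.sum_const, Finset.card_fin, nsmul_eq_mul]

lemma variance_sum_comp_le_sum_variance_add_mixing {E : Type*} [MeasurableSpace E]
    {Z : Fin n → Ω → E} (hZ : ∀ k, Measurable (Z k)) {φ : E → ℝ} (hφ : Measurable φ) {r : ℝ}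
    (hφr : ∀ k, ∀ᵐ ω ∂P, |φ (Z k ω)| ≤ r) :
    Var[fun ω ↦ ∑ k, φ (Z k ω); P] ≤ ∑ k, Var[fun ω ↦ φ (Z k ω); P]
      + n * (8 * r ^ 2 * ∑ ℓ ∈ Finset.Icc 1 (n - 1), mixingSeq P Z ℓ) := by
  have hrange (k : Fin n) : ∀ᵐ ω ∂P, φ (Z k ω) ∈ Set.Icc (-r) r :=
    (hφr k).mono fun ω hω ↦ abs_le.1 hω
  refine (variance_sum_le_sum_variance_add_mixing (fun k ↦ hφ.comp (hZ k)) hrange).trans ?_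
  gcongr _ + n * (?_ * ?_)
  · exact Finset.sum_nonneg fun ℓ _ ↦ mixingSeq_nonneg _ ℓ
  · linarith
  · exact Finset.sum_le_sum fun ℓ _ ↦ mixingSeq_comp_le Z hφ ℓ

lemma integral_norm_sum_sq_le_mixing {W : Fin n → Ω → ℂ} (hW : ∀ k, Measurable (W k)) {r : ℝ}
    (hWr : ∀ k, ∀ᵐ ω ∂P, ‖W k ω‖ ≤ r) (hW0 : ∀ k, P[W k] = 0) :
    ∫ ω, ‖∑ k, W k ω‖ ^ 2 ∂P
      ≤ n * (r ^ 2 + 16 * r ^ 2 * ∑ ℓ ∈ Finset.Icc 1 (n - 1), mixingSeq P W ℓ) := by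
  have hW_memLp (k : Fin n) : MemLp (W k) 2 P := .of_bound (hW k).aestronglyMeasurable r (hWr k)
  have hsum0 : ∫ ω, ∑ k, W k ω ∂P = 0 := by
    rw [integral_finsetSum _ fun k _ ↦ (hW_memLp k).integrable one_le_two]
    exact Finset.sum_eq_zero fun k _ ↦ hW0 k
  have hre := variance_sum_comp_le_sum_variance_add_mixing hW Complex.measurable_re fun k ↦
    (hWr k).mono fun ω ↦ (Complex.abs_re_le_norm _).trans
  have him := variance_sum_comp_le_sum_variance_add_mixing hW Complex.measurable_im fun k ↦
    (hWr k).mono fun ω ↦ (Complex.abs_im_le_norm _).trans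
  have hdiag (k : Fin n) :
      Var[fun ω ↦ (W k ω).re; P] + Var[fun ω ↦ (W k ω).im; P] ≤ r ^ 2 := by
    rw [← integral_norm_sq_eq_variance_re_add_variance_im (hW_memLp k) (hW0 k)]
    refine (integral_mono_ae (hW_memLp k).integrable_norm_pow' (integrable_const (r ^ 2))
      ((hWr k).mono fun ω hω ↦ ?_)).trans_eq (by simp)
    exact pow_le_pow_left₀ (norm_nonneg _) hω 2
  have hdiag_sum : ∑ k, Var[fun ω ↦ (W k ω).re; P] + ∑ k, Var[fun ω ↦ (W k ω).im; P]
      ≤ n * r ^ 2 := by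
    rw [← Finset.sum_add_distrib]
    simpa using Finset.sum_le_card_nsmul Finset.univ _ _ fun k _ ↦ hdiag k
  rw [integral_norm_sq_eq_variance_re_add_variance_im (memLp_finsetSum _ fun k _ ↦ hW_memLp k)
    hsum0]
  simp only [Complex.re_sum, Complex.im_sum]
  linarith

end SecondMoment

lemma integral_comp_sub_comp_eq_zero_of_map_eq {Ω E G : Type*} [MeasurableSpace Ω]
    [MeasurableSpace E] [NormedAddCommGroup G] [NormedSpace ℝ G] {P : Measure Ω} {X Y : Ω → E}
    (hX : AEMeasurable X P) (hY : AEMeasurable Y P) (hXY : P.map X = P.map Y) {f : E → G}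
    (hf : Integrable f (P.map X)) : ∫ ω, (f (X ω) - f (Y ω)) ∂P = 0 := by
  have hfY : Integrable f (P.map Y) := hXY ▸ hf
  calc ∫ ω, (f (X ω) - f (Y ω)) ∂P
    _ = ∫ ω, f (X ω) ∂P - ∫ ω, f (Y ω) ∂P :=
        integral_sub (hf.comp_aemeasurable hX) (hfY.comp_aemeasurable hY)
    _ = ∫ x, f x ∂P.map X - ∫ x, f x ∂P.map Y := by
        rw [integral_map hX hf.aestronglyMeasurable, integral_map hY hfY.aestronglyMeasurable]
    _ = 0 := by rw [hXY, sub_self]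

theorem empirical_charFun_diff_sq_le_mixing_general {Ω E : Type*} [MeasurableSpace Ω]
    [MeasurableSpace E] (P : Measure Ω) [IsProbabilityMeasure P] {n : ℕ} {X Y : Fin n → Ω → E}
    (hX : ∀ k, Measurable (X k)) (hY : ∀ k, Measurable (Y k))
    (hid : ∀ k, P.map (X k) = P.map (Y k)) {f : E → ℂ} (hf : Measurable f)
    (hf1 : ∀ x, ‖f x‖ ≤ 1) :
    ∫ ω, ‖(1 / n : ℂ) * ∑ k, f (X k ω) - (1 / n : ℂ) * ∑ k, f (Y k ω)‖ ^ 2 ∂P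
      ≤ 4 / n + (64 / n) *
          ∑ ℓ ∈ Finset.Icc 1 (n - 1), mixingSeq P (fun k ω ↦ (X k ω, Y k ω)) ℓ := by
  let φ : E × E → ℂ := fun z ↦ f z.1 - f z.2
  let Z : Fin n → Ω → E × E := fun k ω ↦ (X k ω, Y k ω)
  have hφ : Measurable φ := (hf.comp measurable_fst).sub (hf.comp measurable_snd)
  have hφ2 (z : E × E) : ‖φ z‖ ≤ 2 :=
    (norm_sub_le_of_le (hf1 _) (hf1 _)).trans_eq one_add_one_eq_two
  have hcentred (k : Fin n) : ∫ ω, φ (Z k ω) ∂P = 0 :=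
    have := Measure.isProbabilityMeasure_map (μ := P) (hX k).aemeasurable
    integral_comp_sub_comp_eq_zero_of_map_eq (hX k).aemeasurable (hY k).aemeasurable (hid k)
      (.of_bound hf.aestronglyMeasurable 1 (.of_forall hf1))
  have hmoment := integral_norm_sum_sq_le_mixing (P := P)
    (fun k ↦ hφ.comp ((hX k).prodMk (hY k))) (fun k ↦ .of_forall fun ω ↦ hφ2 (Z k ω)) hcentred
  have hnorm (ω : Ω) : ‖(1 / n : ℂ) * ∑ k, f (X k ω) - (1 / n : ℂ) * ∑ k, f (Y k ω)‖ ^ 2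
      = (1 / n : ℝ) ^ 2 * ‖∑ k, φ (Z k ω)‖ ^ 2 := by
    simp [φ, Z, ← mul_sub, Finset.sum_sub_distrib, mul_pow]
  simp_rw [hnorm, integral_const_mul]
  calc (1 / n : ℝ) ^ 2 * ∫ ω, ‖∑ k, φ (Z k ω)‖ ^ 2 ∂P
    _ ≤ (1 / n : ℝ) ^ 2 * (n * (2 ^ 2 + 16 * 2 ^ 2 *
          ∑ ℓ ∈ Finset.Icc 1 (n - 1), mixingSeq P Z ℓ)) := by
        refine mul_le_mul_of_nonneg_left (hmoment.trans ?_) (by positivity)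
        gcongr with ℓ
        exact mixingSeq_comp_le Z hφ ℓ
    _ = 4 / n + 64 / n * ∑ ℓ ∈ Finset.Icc 1 (n - 1), mixingSeq P Z ℓ := by
        rcases eq_or_ne n 0 with rfl | hn
        · simp
        · field_simp
          ring

lemma norm_exp_I_mul_sum_ofReal_mul_ofReal {ι : Type*} (s : Finset ι) (ξ x : ι → ℝ) :
    ‖Complex.exp (Complex.I * ∑ i ∈ s, (ξ i : ℂ) * (x i : ℂ))‖ = 1 := by
  exact_mod_cast Complex.norm_exp_I_mul_ofReal (∑ i ∈ s, ξ i * x i)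

/-- Second-moment bound on the difference of empirical characteristic functions
in terms of the Rosenblatt mixing coefficients of the couples `Z_k = (X_k, Y_k)`. -/
theorem empirical_charFun_diff_sq_le_mixing {d n : ℕ}
    (Ω : Type*) [MeasurableSpace Ω] (P : Measure Ω) [IsProbabilityMeasure P]
    (X Y : Fin n → Ω → (Fin d → ℝ))
    (hXmeas : ∀ k, Measurable (X k)) (hYmeas : ∀ k, Measurable (Y k))
    (hXYcube : ∀ k ω i, X k ω i ∈ Set.Icc (0 : ℝ) 1 ∧ Y k ω i ∈ Set.Icc (0 : ℝ) 1)
    (hid : ∀ k, P.map (X k) = P.map (Y k)) (ξ : Fin d → ℝ) :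
    ∫ ω, ‖(1 / n : ℂ) * ∑ k, Complex.exp (Complex.I * ∑ i, (ξ i : ℂ) * (X k ω i : ℂ))
        - (1 / n : ℂ) * ∑ k, Complex.exp (Complex.I * ∑ i, (ξ i : ℂ) * (Y k ω i : ℂ))‖ ^ 2 ∂P
      ≤ 4 / n + (128 / n) *
          ∑ ℓ ∈ Finset.Icc 1 (n - 1), mixingSeq P (fun k ω => (X k ω, Y k ω)) ℓ := by
  refine (empirical_charFun_diff_sq_le_mixing_general P hXmeas hYmeas hid (by fun_prop)
    fun x ↦ (norm_exp_I_mul_sum_ofReal_mul_ofReal Finset.univ ξ x).le).trans ?_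
  have hsum := Finset.sum_nonneg fun ℓ (_ : ℓ ∈ Finset.Icc 1 (n - 1)) ↦
    mixingSeq_nonneg (P := P) (fun k ω ↦ (X k ω, Y k ω)) ℓ
  gcongr
  norm_num
end
end

section
/- (Corollary 5.) Let x_1,…,x_N be points in [0,1]^d with N ≥ 2, and let 1 ≤ n ≤ N. Let τ be a uniformly random n-element subset of {1,…,N}, μ_τ = (1/n) Σ_{j∈τ} δ_{x_j}, and μ = (1/N) Σ_{j=1}^N δ_{x_j}. Then E(W₁(μ_τ, μ)) ≤ √(2/n) if d = 1; E(W₁(μ_τ, μ)) ≤ 8·√((1 + log(2n))/n) if d = 2; and E(W₁(μ_τ, μ)) ≤ 13√d / n^{1/d} if d ≥ 3. -/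
open MeasureTheory Real ENNReal Finset

noncomputable section

/-- Euclidean distance on `Fin d → ℝ`. -/
def euclidDist {d : ℕ} (x y : Fin d → ℝ) : ℝ := Real.sqrt (∑ i, (x i - y i) ^ 2)

/-- `γ` is a coupling of `μ` and `ν`. -/
def IsCoupling {α : Type*} [MeasurableSpace α]
    (γ : Measure (α × α)) (μ ν : Measure α) : Prop :=
  γ.map Prod.fst = μ ∧ γ.map Prod.snd = ν

/-- Optimal transport cost for a cost function `c`. -/
def transportCost {α : Type*} [MeasurableSpace α] (c : α → α → ℝ)
    (μ ν : Measure α) : ℝ≥0∞ :=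
  ⨅ (γ : Measure (α × α)) (_ : IsCoupling γ μ ν),
    ∫⁻ p, ENNReal.ofReal (c p.1 p.2) ∂γ

/-- Euclidean Kantorovich distance `W₁`. -/
def W1 {d : ℕ} (μ ν : Measure (Fin d → ℝ)) : ℝ≥0∞ := transportCost euclidDist μ ν

/-- The collection `𝒢_n` of all `n`-element subsets of `{1,…,N}`. -/
def subsetsCard (N n : ℕ) : Finset (Finset (Fin N)) :=
  Finset.powersetCard n (Finset.univ : Finset (Fin N))

/-- The empirical measure `μ_τ = (1/n) Σ_{j ∈ τ} δ_{x_j}`. -/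
def empOfSubset {d N : ℕ} (n : ℕ) (x : Fin N → (Fin d → ℝ))
    (τ : Finset (Fin N)) : Measure (Fin d → ℝ) :=
  (n : ℝ≥0∞)⁻¹ • ∑ j ∈ τ, Measure.dirac (x j)

/-- The average measure `μ = (1/N) Σ_{j=1}^N δ_{x_j}`. -/
def avgMeasure {d N : ℕ} (x : Fin N → (Fin d → ℝ)) : Measure (Fin d → ℝ) :=
  (N : ℝ≥0∞)⁻¹ • ∑ j, Measure.dirac (x j)

/-!
By linear-programming duality, `W₁(μ_τ, μ)` is at most the supremum over `1`-Lipschitz `f` of the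
difference between the means of `f` over the sample `τ` and over all points. On the given points,
every such `f` is within `ε` of a constant plus a combination, with coefficients bounded uniformly
in `f`, of finitely many functions `θ` independent of `f`. Hence the supremum is controlled by the
deviations of the `θ` alone, and sampling without replacement makes the expected deviation of each
`θ` at most `√(𝔼 θ² / n)`, as for independent samples.

For `d = 1` and `d ≥ 3` the `θ` are the indicators of dyadic cubes, and the coefficients are the
increments of `f` between centres of a cube and of its parent. The resulting sum over scales is
geometric, decreasing for `d = 1` and increasing for `d ≥ 3`.

For `d = 2` this sum is constant over the scales, which would cost a full factor `log n`. Instead,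
`f` at a point is its global average plus the pairing of its gradient on a fine grid with a flow
concentrating the uniform weight at that point, and `θ` is the flow through an edge. Passing from
a dyadic square of side `2ᵏ⁺¹` to one of side `2ᵏ` takes a flow of `ℓ¹` norm `O(2ᵏ)` and sup norm
`O(2⁻ᵏ)`, so the energy of the whole flow is linear in the number of scales and only its square
root enters the bound.
-/

open scoped BigOperators

section Duality

variable {ι κ α : Type*} [Fintype ι] [Fintype κ]

/-- The linear map sending a transport plan to its two marginals and its total cost for the cost
matrix `C`. -/
def marginalsCost (C : ι → κ → ℝ) : (ι × κ → ℝ) →ₗ[ℝ] (ι → ℝ) × (κ → ℝ) × ℝ :=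
  (LinearMap.pi fun i => ∑ j, LinearMap.proj (i, j)).prod
    ((LinearMap.pi fun j => ∑ i, LinearMap.proj (i, j)).prod
      (∑ i, ∑ j, C i j • LinearMap.proj (i, j)))

lemma marginalsCost_apply (C : ι → κ → ℝ) (γ : ι × κ → ℝ) :
    marginalsCost C γ =
      (fun i => ∑ j, γ (i, j), fun j => ∑ i, γ (i, j), ∑ i, ∑ j, C i j * γ (i, j)) := by
  ext <;> simp [marginalsCost]

lemma marginalsCost_single [DecidableEq ι] [DecidableEq κ] (C : ι → κ → ℝ) (i : ι) (j : κ) :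
    marginalsCost C (Pi.single (i, j) 1) = (Pi.single i 1, Pi.single j 1, C i j) := by
  ext <;> simp [marginalsCost_apply, Pi.single_apply, Prod.ext_iff, ite_and, eq_comm]

lemma marginalsCost_mul (C : ι → κ → ℝ) {a : ι → ℝ} {b : κ → ℝ} (ha : ∑ i, a i = 1)
    (hb : ∑ j, b j = 1) :
    marginalsCost C (fun p => a p.1 * b p.2) = (a, b, ∑ i, ∑ j, C i j * (a i * b j)) := by
  simp [marginalsCost_apply, ← mul_sum, ← sum_mul, ha, hb]

lemma mul_mem_stdSimplex {a : ι → ℝ} {b : κ → ℝ} (ha : a ∈ stdSimplex ℝ ι)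
    (hb : b ∈ stdSimplex ℝ κ) : (fun p : ι × κ => a p.1 * b p.2) ∈ stdSimplex ℝ (ι × κ) := by
  refine ⟨fun p => mul_nonneg (ha.1 _) (hb.1 _), ?_⟩
  simp [Fintype.sum_prod_type, ← mul_sum, ha.2, hb.2]

lemma apply_pi_prod_pi_prod [DecidableEq ι] [DecidableEq κ]
    (F : (ι → ℝ) × (κ → ℝ) × ℝ →ₗ[ℝ] ℝ) (a : ι → ℝ) (b : κ → ℝ) (t : ℝ) :
    F (a, b, t) = ∑ i, a i * F (Pi.single i 1, 0, 0) + ∑ j, b j * F (0, Pi.single j 1, 0)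
      + t * F (0, 0, 1) := by
  have hsplit : (a, b, t) = ∑ i, a i • ((Pi.single i 1, 0, 0) : (ι → ℝ) × (κ → ℝ) × ℝ)
      + ∑ j, b j • ((0, Pi.single j 1, 0) : (ι → ℝ) × (κ → ℝ) × ℝ)
      + t • ((0, 0, 1) : (ι → ℝ) × (κ → ℝ) × ℝ) := by
    ext <;> simp [Prod.fst_sum, Prod.snd_sum, Finset.sum_apply, Pi.single_apply]
  rw [hsplit]
  simp only [map_add, map_sum, map_smul, smul_eq_mul]

theorem exists_plan_cost_le_of_forall_potentials (C : ι → κ → ℝ) {a : ι → ℝ} {b : κ → ℝ} {S : ℝ}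
    (ha : a ∈ stdSimplex ℝ ι) (hb : b ∈ stdSimplex ℝ κ)
    (hS : ∀ (φ : ι → ℝ) (ψ : κ → ℝ), (∀ i j, φ i + ψ j ≤ C i j) →
      ∑ i, a i * φ i + ∑ j, b j * ψ j ≤ S) :
    ∃ γ ∈ stdSimplex ℝ (ι × κ), ∃ t ≤ S, marginalsCost C γ = (a, b, t) := by
  classical
  by_contra! hcost
  have hnot_mem : (a, b, S) ∉ marginalsCost C '' stdSimplex ℝ (ι × κ) := by
    rintro ⟨γ, hγ, hγS⟩
    exact hcost γ hγ S le_rfl hγS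
  obtain ⟨F, u, hFS, hF⟩ := geometric_hahn_banach_point_closed
    ((convex_stdSimplex ℝ _).linear_image (marginalsCost C))
    ((isCompact_stdSimplex ℝ _).image
      (marginalsCost C).continuous_of_finiteDimensional).isClosed hnot_mem
  have hF_apply := apply_pi_prod_pi_prod (F : (ι → ℝ) × (κ → ℝ) × ℝ →ₗ[ℝ] ℝ)
  simp only [ContinuousLinearMap.coe_coe] at hF_apply
  set l := F (0, 0, 1)
  -- The product plan costs more than `S`, which forces the slope of `F` in the cost to be positive.
  have hl : 0 < l := by
    have hprod := hF _ ⟨_, mul_mem_stdSimplex ha hb, marginalsCost_mul C ha.2 hb.2⟩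
    have hprod_cost : S < ∑ i, ∑ j, C i j * (a i * b j) := by
      by_contra! h
      exact hcost _ (mul_mem_stdSimplex ha hb) _ h (marginalsCost_mul C ha.2 hb.2)
    rw [hF_apply] at hFS hprod
    nlinarith
  have hvertex (i : ι) (j : κ) :
      u < F (Pi.single i 1, 0, 0) + F (0, Pi.single j 1, 0) + C i j * l := by
    have h := hF _ ⟨_, single_mem_stdSimplex ℝ (i, j), marginalsCost_single C i j⟩
    rw [hF_apply] at h
    simpa [Pi.single_apply] using h
  have hdual := hS (fun i => (u - F (Pi.single i 1, 0, 0)) / l)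
    (fun j => -F (0, Pi.single j 1, 0) / l) fun i j => by
      rw [← add_div, div_le_iff₀ hl]
      linarith [hvertex i j]
  simp only [mul_div_assoc', mul_sub, mul_neg, ← sum_div, sum_sub_distrib,
    sum_neg_distrib, ← sum_mul, ha.2, one_mul, ← add_div, div_le_iff₀ hl] at hdual
  rw [hF_apply] at hFS
  linarith

/-- `f` is `1`-Lipschitz for the cost `c`; one-sided, so that `c` need not be symmetric. -/
def IsCostLipschitz (c : α → α → ℝ) (f : α → ℝ) : Prop :=
  ∀ u v, f u - f v ≤ c u v

/-- The `c`-transform `y ↦ min_j (c(y, x_j) - ψ_j)` of a potential `ψ` on the points `x_j`. -/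
def costTransform [Nonempty κ] (c : α → α → ℝ) (x : κ → α) (ψ : κ → ℝ) (y : α) : ℝ :=
  univ.inf' univ_nonempty fun j => c y (x j) - ψ j

lemma isCostLipschitz_costTransform [Nonempty κ] {c : α → α → ℝ}
    (htri : ∀ u v w, c u w ≤ c u v + c v w) (x : κ → α) (ψ : κ → ℝ) :
    IsCostLipschitz c (costTransform c x ψ) := by
  intro u v
  obtain ⟨j, hj, hv⟩ := exists_mem_eq_inf' univ_nonempty fun j => c v (x j) - ψ j
  have hu : costTransform c x ψ u ≤ c u (x j) - ψ j := inf'_le _ hj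
  have hv : costTransform c x ψ v = c v (x j) - ψ j := hv
  linarith [htri u v (x j)]

lemma sum_potentials_le_sum_costTransform [Nonempty ι] {c : α → α → ℝ} (hself : ∀ u, c u u = 0)
    (x : ι → α) {a b φ ψ : ι → ℝ} (ha : 0 ≤ a) (hb : 0 ≤ b)
    (hφψ : ∀ i j, φ i + ψ j ≤ c (x i) (x j)) :
    ∑ i, a i * φ i + ∑ j, b j * ψ j ≤ ∑ i, (a i - b i) * costTransform c x ψ (x i) := by
  rw [← sum_add_distrib]
  refine sum_le_sum fun i _ => ?_
  have hφ : φ i ≤ costTransform c x ψ (x i) :=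
    le_inf' _ _ fun j _ => by linarith [hφψ i j]
  have hψ : costTransform c x ψ (x i) ≤ -ψ i :=
    (inf'_le _ (mem_univ i)).trans_eq (by rw [hself, zero_sub])
  nlinarith [mul_le_mul_of_nonneg_left hφ (ha i), mul_le_mul_of_nonneg_left hψ (hb i)]

variable [MeasurableSpace α] [MeasurableSingletonClass α]

lemma transportCost_sum_dirac_le {c : α → α → ℝ} (hc : ∀ u v, 0 ≤ c u v) (x : ι → α) (y : κ → α)
    {γ : ι × κ → ℝ} (hγ : 0 ≤ γ) :
    transportCost c (∑ i, ENNReal.ofReal (∑ j, γ (i, j)) • Measure.dirac (x i))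
        (∑ j, ENNReal.ofReal (∑ i, γ (i, j)) • Measure.dirac (y j)) ≤
      ENNReal.ofReal (∑ i, ∑ j, c (x i) (y j) * γ (i, j)) := by
  let Γ : Measure (α × α) := ∑ p, ENNReal.ofReal (γ p) • Measure.dirac (x p.1, y p.2)
  have hΓ : IsCoupling Γ (∑ i, ENNReal.ofReal (∑ j, γ (i, j)) • Measure.dirac (x i))
      (∑ j, ENNReal.ofReal (∑ i, γ (i, j)) • Measure.dirac (y j)) := by
    constructor
    · simp only [Γ, ← Measure.mapₗ_apply_of_measurable measurable_fst, map_sum, map_smul]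
      simp [Measure.mapₗ_apply_of_measurable measurable_fst, Measure.map_dirac' measurable_fst,
        Fintype.sum_prod_type, ENNReal.ofReal_sum_of_nonneg fun j _ => hγ (_, j), sum_smul]
    · simp only [Γ, ← Measure.mapₗ_apply_of_measurable measurable_snd, map_sum, map_smul]
      simp [Measure.mapₗ_apply_of_measurable measurable_snd, Measure.map_dirac' measurable_snd,
        Fintype.sum_prod_type_right, ENNReal.ofReal_sum_of_nonneg fun i _ => hγ (i, _), sum_smul]
  refine (iInf₂_le Γ hΓ).trans_eq ?_
  simp only [Γ, lintegral_finsetSum_measure, lintegral_smul_measure, lintegral_dirac, smul_eq_mul,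
    ← ENNReal.ofReal_mul (hγ _)]
  rw [← ENNReal.ofReal_sum_of_nonneg fun p _ => mul_nonneg (hγ p) (hc _ _), Fintype.sum_prod_type]
  simp only [mul_comm]

theorem transportCost_sum_dirac_le_of_forall_isCostLipschitz [Nonempty ι] {c : α → α → ℝ}
    (hc : ∀ u v, 0 ≤ c u v) (hself : ∀ u, c u u = 0) (htri : ∀ u v w, c u w ≤ c u v + c v w)
    (x : ι → α) {a b : ι → ℝ} (ha : a ∈ stdSimplex ℝ ι) (hb : b ∈ stdSimplex ℝ ι) {S : ℝ}
    (hS : ∀ f, IsCostLipschitz c f → ∑ i, (a i - b i) * f (x i) ≤ S) :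
    transportCost c (∑ i, ENNReal.ofReal (a i) • Measure.dirac (x i))
      (∑ i, ENNReal.ofReal (b i) • Measure.dirac (x i)) ≤ ENNReal.ofReal S := by
  obtain ⟨γ, hγ, t, htS, hmarg⟩ :=
    exists_plan_cost_le_of_forall_potentials (fun i j => c (x i) (x j)) ha hb fun φ ψ hφψ =>
      (sum_potentials_le_sum_costTransform hself x ha.1 hb.1 hφψ).trans
        (hS _ (isCostLipschitz_costTransform htri x ψ))
  simp only [marginalsCost_apply, Prod.mk.injEq] at hmarg
  obtain ⟨rfl, rfl, rfl⟩ := hmarg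
  exact (transportCost_sum_dirac_le hc x x hγ.1).trans (ENNReal.ofReal_le_ofReal htS)

end Duality

section EuclideanDistance

variable {d : ℕ}

lemma euclidDist_eq_dist_toLp (x y : Fin d → ℝ) :
    euclidDist x y = dist (WithLp.toLp 2 x) (WithLp.toLp 2 y) := by
  simp [euclidDist, EuclideanSpace.dist_eq, Real.dist_eq, sq_abs]

lemma euclidDist_self (x : Fin d → ℝ) : euclidDist x x = 0 := by
  simp [euclidDist]

lemma euclidDist_nonneg (x y : Fin d → ℝ) : 0 ≤ euclidDist x y :=
  Real.sqrt_nonneg _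

lemma euclidDist_comm (x y : Fin d → ℝ) : euclidDist x y = euclidDist y x := by
  simp only [euclidDist_eq_dist_toLp, dist_comm]

lemma euclidDist_triangle (x y z : Fin d → ℝ) :
    euclidDist x z ≤ euclidDist x y + euclidDist y z := by
  simpa only [euclidDist_eq_dist_toLp] using dist_triangle _ _ _

lemma euclidDist_le_sqrt_mul {x y : Fin d → ℝ} {r : ℝ} (hr : 0 ≤ r) (h : ∀ i, |x i - y i| ≤ r) :
    euclidDist x y ≤ √d * r := by
  rw [euclidDist, ← Real.sqrt_sq hr, ← Real.sqrt_mul (by positivity)]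
  refine Real.sqrt_le_sqrt ?_
  simpa using sum_le_card_nsmul univ (fun i => (x i - y i) ^ 2) (r ^ 2) fun i _ =>
    sq_le_sq' (abs_le.1 (h i)).1 (abs_le.1 (h i)).2

lemma abs_sub_le_of_isCostLipschitz {f : (Fin d → ℝ) → ℝ} (hf : IsCostLipschitz euclidDist f)
    (u v : Fin d → ℝ) : |f u - f v| ≤ euclidDist u v :=
  abs_sub_le_iff.2 ⟨hf u v, euclidDist_comm u v ▸ hf v u⟩

end EuclideanDistance

section SamplingWithoutReplacement

variable {ι : Type*} [Fintype ι]

/-- The deviation of the mean of `h` over the sample `τ` from its mean over the population. -/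
def sampleDev (τ : Finset ι) (h : ι → ℝ) : ℝ := 𝔼 j ∈ τ, h j - 𝔼 j, h j

lemma sampleDev_add (τ : Finset ι) (g h : ι → ℝ) :
    sampleDev τ (fun j => g j + h j) = sampleDev τ g + sampleDev τ h := by
  simp only [sampleDev, expect_add_distrib]
  ring

lemma sampleDev_mul_left (τ : Finset ι) (r : ℝ) (h : ι → ℝ) :
    sampleDev τ (fun j => r * h j) = r * sampleDev τ h := by
  simp only [sampleDev, ← mul_expect, mul_sub]

lemma sampleDev_sum {β : Type*} (τ : Finset ι) (s : Finset β) (h : β → ι → ℝ) :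
    sampleDev τ (fun j => ∑ e ∈ s, h e j) = ∑ e ∈ s, sampleDev τ (h e) := by
  simp only [sampleDev, expect_sum_comm, sum_sub_distrib]

lemma sampleDev_const {τ : Finset ι} (hτ : τ.Nonempty) (r : ℝ) : sampleDev τ (fun _ => r) = 0 := by
  have : Nonempty ι := ⟨hτ.choose⟩
  simp [sampleDev, expect_const hτ]

lemma sampleDev_le_two_mul {τ : Finset ι} (hτ : τ.Nonempty) {h : ι → ℝ} {ε : ℝ}
    (hh : ∀ j, |h j| ≤ ε) : sampleDev τ h ≤ 2 * ε := by
  have hsample : 𝔼 j ∈ τ, h j ≤ ε := expect_le hτ fun j _ => (abs_le.1 (hh j)).2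
  have hpop : -ε ≤ 𝔼 j, h j := le_expect ⟨_, mem_univ hτ.choose⟩ fun j _ => (abs_le.1 (hh j)).1
  rw [sampleDev]
  linarith

variable {n : ℕ}

lemma sum_sub_expect_eq_zero (h : ι → ℝ) : ∑ j, (h j - 𝔼 i, h i) = 0 := by
  simp only [sum_sub_distrib, sum_const, card_smul_expect, sub_self]

lemma sum_sub_expect_sq_le (h : ι → ℝ) : ∑ j, (h j - 𝔼 i, h i) ^ 2 ≤ ∑ j, h j ^ 2 := by
  have hexp : ∑ j, (h j - 𝔼 i, h i) ^ 2 + ∑ j : ι, (𝔼 i, h i) ^ 2 =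
      ∑ j, h j ^ 2 - 2 * (𝔼 i, h i) * ∑ j, (h j - 𝔼 i, h i) := by
    rw [mul_sum, ← sum_add_distrib, ← sum_sub_distrib]
    exact sum_congr rfl fun j _ => by ring
  rw [sum_sub_expect_eq_zero] at hexp
  linarith [sum_nonneg fun (j : ι) (_ : j ∈ univ) => sq_nonneg (𝔼 i, h i)]

lemma sampleDev_eq_sum_div {τ : Finset ι} (hτ : #τ = n) (hn : 1 ≤ n) (h : ι → ℝ) :
    sampleDev τ h = (∑ j ∈ τ, (h j - 𝔼 i, h i)) / n := by
  have : (n : ℝ) ≠ 0 := by positivity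
  rw [sampleDev, expect_eq_sum_div_card, hτ, sum_sub_distrib, sum_const, hτ, nsmul_eq_mul]
  field_simp

lemma exists_card_filter_powersetCard_pair_eq (ι : Type*) [Fintype ι] [DecidableEq ι] (n : ℕ) :
    ∃ B : ℕ, ∀ i j : ι, i ≠ j → #{τ ∈ powersetCard n univ | i ∈ τ ∧ j ∈ τ} = B := by
  rcases lt_or_ge n 2 with hn | hn
  · refine ⟨0, fun i j hij => card_eq_zero.2 (filter_eq_empty_iff.2 ?_)⟩
    rintro τ hτ ⟨hi, hj⟩
    have := one_lt_card.2 ⟨i, hi, j, hj, hij⟩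
    rw [(mem_powersetCard.1 hτ).2] at this
    omega
  · refine ⟨(Fintype.card ι - 2).choose (n - 2), fun i j hij => ?_⟩
    have h := card_filter_powersetCard_subset {i, j} univ n (subset_univ _)
      (by rwa [card_pair hij])
    simpa only [insert_subset_iff, singleton_subset_iff, card_pair hij, card_univ] using h

lemma card_filter_powersetCard_mem [DecidableEq ι] (hn : 1 ≤ n) (i : ι) :
    #{τ ∈ powersetCard n univ | i ∈ τ} = (Fintype.card ι - 1).choose (n - 1) := by
  simpa using card_filter_powersetCard_subset {i} univ n (subset_univ _) (by simpa)

-- All pairs `i ≠ j` lie in equally many samples, and `∑ i ≠ j, η i * η j = -∑ i, η i ^ 2`, so the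
-- off-diagonal terms only decrease the second moment.
lemma sum_powersetCard_sq_sum_le (hn : 1 ≤ n) {η : ι → ℝ} (hη : ∑ j, η j = 0) :
    ∑ τ ∈ powersetCard n univ, (∑ j ∈ τ, η j) ^ 2 ≤
      (Fintype.card ι - 1).choose (n - 1) * ∑ j, η j ^ 2 := by
  classical
  obtain ⟨B, hB⟩ := exists_card_filter_powersetCard_pair_eq ι n
  set A := (Fintype.card ι - 1).choose (n - 1)
  have hcount (i j : ι) : (#{τ ∈ powersetCard n univ | i ∈ τ ∧ j ∈ τ} : ℝ) =
      (if i = j then (A - B : ℝ) else 0) + B := by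
    split_ifs with hij
    · subst hij
      simp only [and_self, card_filter_powersetCard_mem hn i, sub_add_cancel, A]
    · rw [hB i j hij, zero_add]
  have hsq (τ : Finset ι) : (∑ j ∈ τ, η j) ^ 2 =
      ∑ i, ∑ j, if i ∈ τ ∧ j ∈ τ then η i * η j else 0 := by
    simp only [sq, sum_mul_sum, ite_and, sum_ite_mem, univ_inter, sum_ite_irrel, sum_const_zero]
  calc ∑ τ ∈ powersetCard n univ, (∑ j ∈ τ, η j) ^ 2
      = ∑ i, ∑ j, #{τ ∈ powersetCard n univ | i ∈ τ ∧ j ∈ τ} * (η i * η j) := by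
        simp only [hsq]
        rw [sum_comm]
        refine sum_congr rfl fun i _ => ?_
        rw [sum_comm]
        simp only [← sum_filter, sum_const, nsmul_eq_mul]
    _ = (A - B) * ∑ j, η j ^ 2 + B * (∑ j, η j) ^ 2 := by
        simp only [hcount, add_mul, ite_mul, zero_mul, sum_add_distrib, sum_ite_eq, mem_univ,
          if_true, ← mul_sum, sq, sum_mul_sum]
    _ ≤ A * ∑ j, η j ^ 2 := by
        rw [hη, sub_mul]
        nlinarith [sum_nonneg fun j (_ : j ∈ univ) => sq_nonneg (η j), B.cast_nonneg (α := ℝ)]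

lemma expect_powersetCard_sq_sampleDev_le (hn : 1 ≤ n) (hnι : n ≤ Fintype.card ι) (h : ι → ℝ) :
    𝔼 τ ∈ powersetCard n univ, sampleDev τ h ^ 2 ≤ (𝔼 j, h j ^ 2) / n := by
  set N := Fintype.card ι
  have hchoose : (N : ℝ) * (N - 1).choose (n - 1) = N.choose n * n := by
    have := Nat.add_one_mul_choose_eq (N - 1) (n - 1)
    rw [Nat.sub_add_cancel hn, Nat.sub_add_cancel (hn.trans hnι)] at this
    exact_mod_cast this
  have hpos : 0 < (N.choose n : ℝ) := by exact_mod_cast Nat.choose_pos hnι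
  have hmoment : ∑ τ ∈ powersetCard n univ, sampleDev τ h ^ 2 * n ^ 2 ≤
      (N - 1).choose (n - 1) * ∑ j, h j ^ 2 := by
    calc _ = ∑ τ ∈ powersetCard n univ, (∑ j ∈ τ, (h j - 𝔼 i, h i)) ^ 2 := by
          refine sum_congr rfl fun τ hτ => ?_
          rw [sampleDev_eq_sum_div (mem_powersetCard.1 hτ).2 hn]
          field_simp
      _ ≤ (N - 1).choose (n - 1) * ∑ j, (h j - 𝔼 i, h i) ^ 2 :=
          sum_powersetCard_sq_sum_le hn (sum_sub_expect_eq_zero h)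
      _ ≤ _ :=
          mul_le_mul_of_nonneg_left (sum_sub_expect_sq_le h) (Nat.cast_nonneg _)
  rw [← sum_mul] at hmoment
  have hN : (0 : ℝ) < N := by exact_mod_cast hn.trans hnι
  rw [expect_eq_sum_div_card, card_powersetCard, card_univ, Fintype.expect_eq_sum_div_card,
    div_div, div_le_div_iff₀ hpos (by positivity)]
  have hn0 : (0 : ℝ) < n := by positivity
  refine le_of_mul_le_mul_right ?_ hn0
  calc _ = N * ((∑ τ ∈ powersetCard n univ, sampleDev τ h ^ 2) * n ^ 2) := by ring
    _ ≤ N * ((N - 1).choose (n - 1) * ∑ j, h j ^ 2) := by gcongr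
    _ = (∑ j, h j ^ 2) * N.choose n * n := by rw [← mul_assoc, hchoose]; ring

lemma expect_abs_le_sqrt_expect_sq {β : Type*} (s : Finset β) (f : β → ℝ) :
    𝔼 i ∈ s, |f i| ≤ √(𝔼 i ∈ s, f i ^ 2) := by
  refine Real.le_sqrt_of_sq_le ?_
  rcases s.eq_empty_or_nonempty with rfl | hs
  · simp
  · simpa [expect_const hs] using expect_mul_sq_le_sq_mul_sq s (fun i => |f i|) fun _ => 1

lemma expect_powersetCard_abs_sampleDev_le (hn : 1 ≤ n) (hnι : n ≤ Fintype.card ι) (h : ι → ℝ) :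
    𝔼 τ ∈ powersetCard n univ, |sampleDev τ h| ≤ √((𝔼 j, h j ^ 2) / n) :=
  (expect_abs_le_sqrt_expect_sq _ _).trans
    (Real.sqrt_le_sqrt (expect_powersetCard_sq_sampleDev_le hn hnι h))

end SamplingWithoutReplacement

section ExpectedDistance

variable {d N n : ℕ} {x : Fin N → (Fin d → ℝ)}

lemma empOfSubset_eq_sum_smul_dirac (hn : 1 ≤ n) (x : Fin N → (Fin d → ℝ)) (τ : Finset (Fin N)) :
    empOfSubset n x τ =
      ∑ j, ENNReal.ofReal (if j ∈ τ then (n : ℝ)⁻¹ else 0) • Measure.dirac (x j) := by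
  have hn0 : (0 : ℝ) < n := by positivity
  simp [empOfSubset, apply_ite ENNReal.ofReal, ite_smul, smul_sum, ENNReal.ofReal_inv_of_pos hn0]

lemma avgMeasure_eq_sum_smul_dirac (hN : 1 ≤ N) (x : Fin N → (Fin d → ℝ)) :
    avgMeasure x = ∑ j, ENNReal.ofReal (N : ℝ)⁻¹ • Measure.dirac (x j) := by
  have hN0 : (0 : ℝ) < N := by positivity
  simp [avgMeasure, smul_sum, ENNReal.ofReal_inv_of_pos hN0]

theorem W1_empOfSubset_le_of_forall_isCostLipschitz {τ : Finset (Fin N)} (hτ : #τ = n)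
    (hn : 1 ≤ n) {S : ℝ}
    (hS : ∀ f, IsCostLipschitz euclidDist f → sampleDev τ (fun j => f (x j)) ≤ S) :
    W1 (empOfSubset n x τ) (avgMeasure x) ≤ ENNReal.ofReal S := by
  have hN : 1 ≤ N := hn.trans (hτ ▸ card_finset_fin_le τ)
  have : NeZero N := ⟨by omega⟩
  have hn0 : (n : ℝ) ≠ 0 := by positivity
  rw [empOfSubset_eq_sum_smul_dirac hn, avgMeasure_eq_sum_smul_dirac hN]
  refine transportCost_sum_dirac_le_of_forall_isCostLipschitz euclidDist_nonneg euclidDist_self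
    euclidDist_triangle x ⟨fun j => by positivity, ?_⟩ ⟨fun _ => by positivity, ?_⟩
    fun f hf => (Eq.le ?_).trans (hS f hf)
  · simp [hτ, hn0]
  · simp
  · simp only [sampleDev, expect_eq_sum_div_card, hτ, card_fin, sub_mul, sum_sub_distrib,
      ite_mul, zero_mul, sum_ite_mem, univ_inter, ← mul_sum, div_eq_inv_mul]

/-- The expectation of `W₁(μ_τ, μ)` over a uniformly random `n`-element subset `τ`. -/
def expectedW1 (n : ℕ) (x : Fin N → (Fin d → ℝ)) : ℝ≥0∞ :=
  (∑ τ ∈ subsetsCard N n, W1 (empOfSubset n x τ) (avgMeasure x)) / ((subsetsCard N n).card : ℝ≥0∞)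

lemma expectedW1_le_ofReal_expect (hnN : n ≤ N) {S : Finset (Fin N) → ℝ} (hS : ∀ τ, 0 ≤ S τ)
    (hW1 : ∀ τ : Finset (Fin N), #τ = n →
      W1 (empOfSubset n x τ) (avgMeasure x) ≤ ENNReal.ofReal (S τ)) :
    expectedW1 n x ≤ ENNReal.ofReal (𝔼 τ ∈ powersetCard n univ, S τ) := by
  have hpos : 0 < (#(powersetCard n (univ : Finset (Fin N))) : ℝ) := by
    simpa using Nat.choose_pos hnN
  rw [expect_eq_sum_div_card, ENNReal.ofReal_div_of_pos hpos, ENNReal.ofReal_natCast,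
    ENNReal.ofReal_sum_of_nonneg fun τ _ => hS τ]
  exact ENNReal.div_le_div_right (sum_le_sum fun τ hτ => hW1 τ (mem_powersetCard.1 hτ).2) _

variable {β : Type*} {s : Finset β} {θ : β → Fin N → ℝ} {b : β → ℝ} {ε : ℝ}

lemma sampleDev_le_of_approx {ι : Type*} [Fintype ι] {τ : Finset ι} (hτ : τ.Nonempty)
    {h : ι → ℝ} {θ : β → ι → ℝ} {c : ℝ} {g : β → ℝ} (hg : ∀ e ∈ s, |g e| ≤ b e)
    (happrox : ∀ j, |h j - (c + ∑ e ∈ s, g e * θ e j)| ≤ ε) :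
    sampleDev τ h ≤ 2 * ε + ∑ e ∈ s, b e * |sampleDev τ (θ e)| := by
  have hsplit : sampleDev τ h = sampleDev τ (fun j => h j - (c + ∑ e ∈ s, g e * θ e j)) +
      ∑ e ∈ s, g e * sampleDev τ (θ e) := by
    calc sampleDev τ h
        = sampleDev τ (fun j => (h j - (c + ∑ e ∈ s, g e * θ e j)) +
            (c + ∑ e ∈ s, g e * θ e j)) := by simp only [sub_add_cancel]
      _ = _ := by
          simp only [sampleDev_add, sampleDev_const hτ, sampleDev_sum, sampleDev_mul_left, zero_add]
  rw [hsplit]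
  refine add_le_add (sampleDev_le_two_mul hτ happrox) (sum_le_sum fun e he => ?_)
  exact (le_abs_self _).trans ((abs_mul _ _).trans_le (by gcongr; exact hg e he))

theorem expectedW1_le_of_features (hn : 1 ≤ n) (hnN : n ≤ N) (hε : 0 ≤ ε) (hb : ∀ e ∈ s, 0 ≤ b e)
    (happrox : ∀ f, IsCostLipschitz euclidDist f → ∃ (c : ℝ) (g : β → ℝ),
      (∀ e ∈ s, |g e| ≤ b e) ∧ ∀ j, |f (x j) - (c + ∑ e ∈ s, g e * θ e j)| ≤ ε) :
    expectedW1 n x ≤ ENNReal.ofReal (2 * ε + ∑ e ∈ s, b e * √((𝔼 j, θ e j ^ 2) / n)) := by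
  refine (expectedW1_le_ofReal_expect hnN
    (S := fun τ => 2 * ε + ∑ e ∈ s, b e * |sampleDev τ (θ e)|) (fun τ => ?_) fun τ hτ => ?_).trans
    (ENNReal.ofReal_le_ofReal ?_)
  · exact add_nonneg (by positivity)
      (sum_nonneg fun e he => mul_nonneg (hb e he) (abs_nonneg _))
  · refine W1_empOfSubset_le_of_forall_isCostLipschitz hτ hn fun f hf => ?_
    obtain ⟨c, g, hg, hfg⟩ := happrox f hf
    exact sampleDev_le_of_approx (card_pos.1 (by omega)) hg hfg
  · rw [expect_add_distrib, expect_const (powersetCard_nonempty.2 (by simpa)), expect_sum_comm]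
    refine add_le_add_right (sum_le_sum fun e he => ?_) _
    rw [← mul_expect]
    exact mul_le_mul_of_nonneg_left
      (expect_powersetCard_abs_sampleDev_le hn (by simpa) (θ e)) (hb e he)

lemma sum_sqrt_expect_sq_div_le {ι : Type*} [Fintype ι] [Nonempty ι] {θ : β → ι → ℝ}
    {R r : ℝ} (hr : 0 ≤ r) (hR : ∀ j, ∑ e ∈ s, θ e j ^ 2 ≤ R) :
    ∑ e ∈ s, √((𝔼 j, θ e j ^ 2) / r) ≤ √(#s * R / r) := by
  have hnonneg (e : β) : 0 ≤ (𝔼 j, θ e j ^ 2) / r :=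
    div_nonneg (expect_nonneg fun j _ => sq_nonneg _) hr
  have hsum : ∑ e ∈ s, (𝔼 j, θ e j ^ 2) / r ≤ R / r := by
    rw [← sum_div, ← expect_sum_comm]
    exact div_le_div_of_nonneg_right (expect_le univ_nonempty fun j _ => hR j) hr
  refine Real.le_sqrt_of_sq_le ?_
  calc (∑ e ∈ s, √((𝔼 j, θ e j ^ 2) / r)) ^ 2
      ≤ #s * ∑ e ∈ s, √((𝔼 j, θ e j ^ 2) / r) ^ 2 := sq_sum_le_card_mul_sum_sq
    _ = #s * ∑ e ∈ s, (𝔼 j, θ e j ^ 2) / r := by simp only [Real.sq_sqrt (hnonneg _)]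
    _ ≤ #s * R / r := by rw [mul_div_assoc]; gcongr

end ExpectedDistance

section DyadicCells

variable {d : ℕ}

/-- The index of the dyadic interval of length `2⁻ᵏ` containing `t ∈ [0, 1]`; the minimum puts the
endpoint `t = 1` into the last interval. -/
def cellIdx (k : ℕ) (t : ℝ) : ℕ := min ⌊2 ^ k * t⌋₊ (2 ^ k - 1)

lemma cellIdx_lt (k : ℕ) (t : ℝ) : cellIdx k t < 2 ^ k :=
  (min_le_right _ _).trans_lt (Nat.sub_one_lt (by positivity))

lemma cellIdx_succ_div_two (k : ℕ) (t : ℝ) : cellIdx (k + 1) t / 2 = cellIdx k t := by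
  have hfloor : ⌊2 ^ (k + 1) * t⌋₊ / 2 = ⌊2 ^ k * t⌋₊ := by
    rw [← Nat.floor_div_natCast]
    congr 1
    push_cast
    ring
  have : 0 < 2 ^ k := by positivity
  simp only [cellIdx, ← hfloor, pow_succ]
  omega

lemma cellIdx_le_two_pow_mul (k : ℕ) {t : ℝ} (ht : 0 ≤ t) : (cellIdx k t : ℝ) ≤ 2 ^ k * t :=
  (Nat.cast_le.2 (min_le_left _ _)).trans (Nat.floor_le (by positivity))

lemma two_pow_mul_le_cellIdx_add_one (k : ℕ) {t : ℝ} (ht : t ≤ 1) :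
    2 ^ k * t ≤ cellIdx k t + 1 := by
  rcases min_choice ⌊2 ^ k * t⌋₊ (2 ^ k - 1) with h | h
  · rw [cellIdx, h]
    exact (Nat.lt_floor_add_one _).le
  · rw [cellIdx, h, Nat.cast_sub Nat.one_le_two_pow]
    push_cast
    nlinarith [pow_pos (zero_lt_two' ℝ) k]

/-- The multi-index of the dyadic cube of side `2⁻ᵏ` containing `y ∈ [0, 1]ᵈ`. -/
def cell (k : ℕ) (y : Fin d → ℝ) : Fin d → ℕ := fun i => cellIdx k (y i)

/-- The centre of the dyadic cube of side `2⁻ᵏ` with multi-index `Q`. -/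
def cellCenter (k : ℕ) (Q : Fin d → ℕ) : Fin d → ℝ := fun i => (Q i + 1 / 2) / 2 ^ k

lemma cell_zero (y : Fin d → ℝ) : cell 0 y = 0 :=
  funext fun i => Nat.lt_one_iff.1 (cellIdx_lt 0 (y i))

lemma euclidDist_cellCenter_cell_le (k : ℕ) {y : Fin d → ℝ} (hy : ∀ i, y i ∈ Set.Icc (0 : ℝ) 1) :
    euclidDist y (cellCenter k (cell k y)) ≤ √d * (1 / 2) ^ (k + 1) := by
  refine euclidDist_le_sqrt_mul (by positivity) fun i => ?_
  have hlower := cellIdx_le_two_pow_mul k (hy i).1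
  have hupper := two_pow_mul_le_cellIdx_add_one k (hy i).2
  have hdiff : y i - cellCenter k (cell k y) i =
      (2 ^ k * y i - cellIdx k (y i) - 1 / 2) / 2 ^ k := by
    simp only [cellCenter, cell]
    field_simp
    ring
  rw [hdiff, abs_div, abs_of_pos (by positivity : (0 : ℝ) < 2 ^ k), pow_succ', one_div_pow,
    mul_one_div]
  gcongr
  exact abs_le.2 ⟨by linarith, by linarith⟩

lemma euclidDist_cellCenter_div_two_le (k : ℕ) (Q : Fin d → ℕ) :
    euclidDist (cellCenter (k + 1) Q) (cellCenter k fun i => Q i / 2) ≤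
      √d * (1 / 2) ^ (k + 2) := by
  refine euclidDist_le_sqrt_mul (by positivity) fun i => ?_
  have hdiff : cellCenter (k + 1) Q i - cellCenter k (fun i => Q i / 2) i =
      (((Q i % 2 : ℕ) : ℝ) - 1 / 2) / 2 ^ (k + 1) := by
    have hmod : (Q i : ℝ) = 2 * ((Q i / 2 : ℕ) : ℝ) + ((Q i % 2 : ℕ) : ℝ) := by
      exact_mod_cast (Nat.div_add_mod _ _).symm
    simp only [cellCenter]
    rw [hmod]
    field_simp
    ring
  rw [hdiff, abs_div, abs_of_pos (by positivity : (0 : ℝ) < 2 ^ (k + 1)), pow_succ' _ (k + 1),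
    one_div_pow, mul_one_div]
  gcongr
  rcases Nat.mod_two_eq_zero_or_one (Q i) with h | h <;> rw [h] <;> norm_num

/-- The dyadic cubes of levels `1, …, K`; the pair `(k, Q)` stands for the cube of side
`2⁻⁽ᵏ⁺¹⁾` with multi-index `Q`. -/
def dyadicCells (d K : ℕ) : Finset ((_ : ℕ) × (Fin d → ℕ)) :=
  (range K).sigma fun k => Fintype.piFinset fun _ => range (2 ^ (k + 1))

/-- The indicator, evaluated at `y`, of a cube in `dyadicCells`. -/
def cellIndicator (e : (_ : ℕ) × (Fin d → ℕ)) (y : Fin d → ℝ) : ℝ :=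
  if e.2 = cell (e.1 + 1) y then 1 else 0

lemma sum_piFinset_mul_cellIndicator (k : ℕ) (y : Fin d → ℝ) (g : (Fin d → ℕ) → ℝ) :
    ∑ Q ∈ Fintype.piFinset fun _ => range (2 ^ (k + 1)), g Q * cellIndicator ⟨k, Q⟩ y =
      g (cell (k + 1) y) := by
  have hmem : cell (k + 1) y ∈ Fintype.piFinset fun _ => range (2 ^ (k + 1)) :=
    Fintype.mem_piFinset.2 fun i => mem_range.2 (cellIdx_lt _ _)
  simp [cellIndicator, hmem]

lemma apply_cellCenter_eq_add_sum_mul_cellIndicator (f : (Fin d → ℝ) → ℝ) (K : ℕ)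
    (y : Fin d → ℝ) :
    f (cellCenter K (cell K y)) = f (cellCenter 0 0) + ∑ e ∈ dyadicCells d K,
      (f (cellCenter (e.1 + 1) e.2) - f (cellCenter e.1 fun i => e.2 i / 2)) *
        cellIndicator e y := by
  have hparent (k : ℕ) : (fun i => cell (k + 1) y i / 2) = cell k y :=
    funext fun i => cellIdx_succ_div_two k (y i)
  have hlevel (k : ℕ) := sum_piFinset_mul_cellIndicator k y fun Q =>
    f (cellCenter (k + 1) Q) - f (cellCenter k fun i => Q i / 2)
  simp only [dyadicCells, sum_sigma, hlevel, hparent]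
  rw [sum_range_sub (fun k => f (cellCenter k (cell k y))), cell_zero, add_sub_cancel]

variable {N n : ℕ} {x : Fin N → (Fin d → ℝ)}

lemma sum_piFinset_sqrt_cellIndicator_le [NeZero N] (x : Fin N → (Fin d → ℝ)) (n k : ℕ) :
    ∑ Q ∈ Fintype.piFinset fun _ => range (2 ^ (k + 1)),
      √((𝔼 j, cellIndicator ⟨k, Q⟩ (x j) ^ 2) / n) ≤ √(2 ^ d) ^ (k + 1) / √n := by
  have hcard : (((2 ^ (k + 1)) ^ d : ℕ) : ℝ) = (√(2 ^ d) ^ (k + 1)) ^ 2 := by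
    rw [pow_right_comm (√(2 ^ d)), Real.sq_sqrt (by positivity), pow_right_comm 2 d]
    push_cast
    rfl
  refine (sum_sqrt_expect_sq_div_le (R := 1) (by positivity) fun j => ?_).trans_eq ?_
  · have hsq (Q : Fin d → ℕ) :
        cellIndicator ⟨k, Q⟩ (x j) ^ 2 = 1 * cellIndicator ⟨k, Q⟩ (x j) := by
      simp [cellIndicator]
    simp only [hsq, sum_piFinset_mul_cellIndicator k (x j) fun _ => 1, le_refl]
  · rw [Fintype.card_piFinset_const, card_range, mul_one, Real.sqrt_div (by positivity), hcard,
      Real.sqrt_sq (by positivity)]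

theorem expectedW1_le_of_dyadicCells (hn : 1 ≤ n) (hnN : n ≤ N)
    (hx : ∀ j i, x j i ∈ Set.Icc (0 : ℝ) 1) (K : ℕ) :
    expectedW1 n x ≤ ENNReal.ofReal
      (√d * ((1 / 2) ^ K + (∑ k ∈ range K, (√(2 ^ d) / 2) ^ (k + 1)) / (2 * √n))) := by
  have : NeZero N := ⟨by omega⟩
  refine (expectedW1_le_of_features (s := dyadicCells d K)
    (θ := fun e j => cellIndicator e (x j)) (b := fun e => √d * (1 / 2) ^ (e.1 + 2))
    (ε := √d * (1 / 2) ^ (K + 1)) hn hnN (by positivity) (fun e _ => by positivity)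
    fun f hf => ⟨f (cellCenter 0 0),
      fun e => f (cellCenter (e.1 + 1) e.2) - f (cellCenter e.1 fun i => e.2 i / 2),
      fun e _ => ?_, fun j => ?_⟩).trans (ENNReal.ofReal_le_ofReal ?_)
  · exact (abs_sub_le_of_isCostLipschitz hf _ _).trans (euclidDist_cellCenter_div_two_le _ _)
  · rw [← apply_cellCenter_eq_add_sum_mul_cellIndicator]
    exact (abs_sub_le_of_isCostLipschitz hf _ _).trans (euclidDist_cellCenter_cell_le K (hx j))
  · rw [dyadicCells, sum_sigma, mul_add, mul_div_assoc', mul_sum, sum_div]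
    refine add_le_add (by rw [pow_succ]; linarith) (sum_le_sum fun k _ => ?_)
    calc _ = √d * (1 / 2) ^ (k + 2) * ∑ Q ∈ Fintype.piFinset fun _ => range (2 ^ (k + 1)),
          √((𝔼 j, cellIndicator ⟨k, Q⟩ (x j) ^ 2) / n) := by rw [mul_sum]
      _ ≤ √d * (1 / 2) ^ (k + 2) * (√(2 ^ d) ^ (k + 1) / √n) := by
          gcongr
          exact sum_piFinset_sqrt_cellIndicator_le x n k
      _ = √d * (√(2 ^ d) / 2) ^ (k + 1) / (2 * √n) := by
          rw [one_div_pow, div_pow, pow_succ 2 (k + 1)]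
          field_simp

end DyadicCells

section DimensionOneAndAtLeastThree

variable {d N n : ℕ}

lemma sum_range_pow_succ_le_of_lt_one {q : ℝ} (hq0 : 0 ≤ q) (hq1 : q < 1) (m : ℕ) :
    ∑ k ∈ range m, q ^ (k + 1) ≤ q / (1 - q) := by
  rw [le_div_iff₀ (by linarith), mul_comm]
  simp only [pow_succ', ← mul_sum]
  rw [mul_left_comm, mul_neg_geom_sum]
  nlinarith [pow_nonneg hq0 m]

lemma sum_range_pow_succ_le_of_one_lt {q : ℝ} (hq : 1 < q) (m : ℕ) :
    ∑ k ∈ range m, q ^ (k + 1) ≤ q / (q - 1) * q ^ m := by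
  rw [div_mul_eq_mul_div, le_div_iff₀ (by linarith)]
  simp only [pow_succ', ← mul_sum]
  rw [mul_assoc, geom_sum_mul]
  nlinarith

lemma half_pow_add_geom_sum_sqrt_two_le (hn : 1 ≤ n) :
    (1 / 2) ^ (n + 3) + (∑ k ∈ range (n + 3), (√2 / 2) ^ (k + 1)) / (2 * √n) ≤ √(2 / n) := by
  have hn1 : (1 : ℝ) ≤ n := by exact_mod_cast hn
  have hlower : 1.414 ≤ √2 := Real.le_sqrt_of_sq_le (by norm_num)
  have hupper : √2 ≤ 1.415 := Real.sqrt_le_iff.2 ⟨by norm_num, by norm_num⟩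
  have hgeom : ∑ k ∈ range (n + 3), (√2 / 2) ^ (k + 1) ≤ √2 + 1 := by
    refine (sum_range_pow_succ_le_of_lt_one (by positivity) (by linarith) _).trans ?_
    rw [div_le_iff₀ (by linarith)]
    nlinarith [Real.sq_sqrt (zero_le_two (α := ℝ))]
  have hpow : (1 / 2 : ℝ) ^ (n + 3) ≤ 1 / 8 / √n := by
    have hn_le : √n ≤ 2 ^ n :=
      (Real.sqrt_le_iff.2 ⟨by positivity, le_self_pow₀ hn1 two_ne_zero⟩).trans
        (by exact_mod_cast Nat.lt_two_pow_self.le : (n : ℝ) ≤ 2 ^ n)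
    rw [one_div_pow, div_div]
    gcongr
    rw [pow_add, mul_comm]
    gcongr
    norm_num
  calc _ ≤ 1 / 8 / √n + (√2 + 1) / (2 * √n) := by gcongr
    _ = (1 / 8 + (√2 + 1) / 2) / √n := by field_simp
    _ ≤ √2 / √n := by gcongr; linarith
    _ = √(2 / n) := (Real.sqrt_div zero_le_two _).symm

lemma rpow_one_div_le_two_pow_natLog_add_one (n : ℕ) (hd : d ≠ 0) :
    (n : ℝ) ^ (1 / d : ℝ) ≤ 2 ^ (Nat.log (2 ^ d) n + 1) := by
  have hle_pow : (n : ℝ) ≤ (2 ^ (Nat.log (2 ^ d) n + 1)) ^ d := by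
    rw [pow_right_comm]
    exact_mod_cast (Nat.lt_pow_succ_log_self (Nat.one_lt_two_pow hd) n).le
  rw [one_div]
  exact (Real.rpow_le_rpow (by positivity) hle_pow (by positivity)).trans_eq
    (Real.pow_rpow_inv_natCast (by positivity) hd)

lemma half_pow_add_geom_sum_sqrt_two_pow_le (hn : 1 ≤ n) (hd : 3 ≤ d) {K : ℕ}
    (hK : K = Nat.log (2 ^ d) n) :
    (1 / 2) ^ K + (∑ k ∈ range K, (√(2 ^ d) / 2) ^ (k + 1)) / (2 * √n) ≤
      13 / (n : ℝ) ^ (1 / d : ℝ) := by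
  have hpow_le : ((2 : ℝ) ^ d) ^ K ≤ n := by
    exact_mod_cast hK ▸ Nat.pow_log_le_self (2 ^ d) (by omega : n ≠ 0)
  have hroot : (n : ℝ) ^ (1 / d : ℝ) ≤ 2 ^ (K + 1) :=
    hK ▸ rpow_one_div_le_two_pow_natLog_add_one n (by omega)
  have hratio : 4 / 3 ≤ √(2 ^ d) / 2 := by
    have : 8 / 3 ≤ √(2 ^ d) := Real.le_sqrt_of_sq_le <|
      (by norm_num : (8 / 3 : ℝ) ^ 2 ≤ 2 ^ 3).trans (pow_le_pow_right₀ one_le_two hd)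
    linarith
  have hgeom : ∑ k ∈ range K, (√(2 ^ d) / 2) ^ (k + 1) ≤ 4 * (√(2 ^ d) / 2) ^ K := by
    refine (sum_range_pow_succ_le_of_one_lt (by linarith) K).trans ?_
    gcongr
    rw [div_le_iff₀ (by linarith)]
    linarith
  have hratio_pow : (√(2 ^ d) / 2) ^ K ≤ √n / 2 ^ K := by
    rw [div_pow]
    gcongr
    refine Real.le_sqrt_of_sq_le ?_
    rwa [pow_right_comm, Real.sq_sqrt (by positivity)]
  have : 0 < √n := by positivity
  calc _ ≤ (1 / 2) ^ K + 4 * (√n / 2 ^ K) / (2 * √n) := by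
        gcongr
        exact hgeom.trans (by gcongr)
    _ = 6 / 2 ^ (K + 1) := by
        rw [one_div_pow, pow_succ]
        field_simp
        norm_num
    _ ≤ 13 / (n : ℝ) ^ (1 / d : ℝ) := by
        gcongr
        norm_num

theorem expectedW1_le_of_dim_one (hn : 1 ≤ n) (hnN : n ≤ N) {x : Fin N → (Fin 1 → ℝ)}
    (hx : ∀ j i, x j i ∈ Set.Icc (0 : ℝ) 1) : expectedW1 n x ≤ ENNReal.ofReal √(2 / n) := by
  refine (expectedW1_le_of_dyadicCells hn hnN hx (n + 3)).trans (ENNReal.ofReal_le_ofReal ?_)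
  simpa using half_pow_add_geom_sum_sqrt_two_le hn

theorem expectedW1_le_of_three_le_dim (hn : 1 ≤ n) (hnN : n ≤ N) (hd : 3 ≤ d)
    {x : Fin N → (Fin d → ℝ)} (hx : ∀ j i, x j i ∈ Set.Icc (0 : ℝ) 1) :
    expectedW1 n x ≤ ENNReal.ofReal (13 * √d / (n : ℝ) ^ (1 / d : ℝ)) := by
  refine (expectedW1_le_of_dyadicCells hn hnN hx (Nat.log (2 ^ d) n)).trans
    (ENNReal.ofReal_le_ofReal ?_)
  rw [mul_comm 13, mul_div_assoc]
  gcongr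
  exact half_pow_add_geom_sum_sqrt_two_pow_le hn hd rfl

end DimensionOneAndAtLeastThree

section PathFlow

/-- `a` is a probability weight on `{0, …, M - 1}`. -/
def IsWeight (M : ℕ) (a : ℕ → ℝ) : Prop :=
  (∀ i, 0 ≤ a i) ∧ ∑ i ∈ range M, a i = 1

/-- The mass crossing the edge from `i` to `i + 1` when the weight `b` is moved into `a` along the
path `ℕ`: the difference of their cumulative distribution functions. -/
def cdfGap (a b : ℕ → ℝ) (i : ℕ) : ℝ := ∑ l ∈ range (i + 1), (b l - a l)

variable {a b : ℕ → ℝ} {M lo hi : ℕ}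

lemma sum_range_cdfGap_mul_sub (a b v : ℕ → ℝ) (M : ℕ) :
    ∑ i ∈ range M, cdfGap a b i * (v (i + 1) - v i) =
      v M * ∑ i ∈ range M, (b i - a i) + ∑ i ∈ range M, (a i - b i) * v i := by
  induction M with
  | zero => simp
  | succ M ih =>
    rw [sum_range_succ, ih, cdfGap, sum_range_succ _ M, sum_range_succ _ M]
    ring

lemma sum_range_sub_eq_zero (ha : IsWeight M a) (hb : IsWeight M b) :
    ∑ i ∈ range M, (b i - a i) = 0 := by
  rw [sum_sub_distrib, ha.2, hb.2, sub_self]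

lemma sum_range_sub_mul_eq_sum_cdfGap_mul (ha : IsWeight M a) (hb : IsWeight M b) (v : ℕ → ℝ) :
    ∑ i ∈ range M, (a i - b i) * v i = ∑ i ∈ range M, cdfGap a b i * (v (i + 1) - v i) := by
  rw [sum_range_cdfGap_mul_sub, sum_range_sub_eq_zero ha hb, mul_zero, zero_add]

lemma abs_cdfGap_le_one (ha : IsWeight M a) (hb : IsWeight M b) {i : ℕ} (hi : i < M) :
    |cdfGap a b i| ≤ 1 := by
  have hcdf {c : ℕ → ℝ} (hc : IsWeight M c) : ∑ l ∈ range (i + 1), c l ∈ Set.Icc (0 : ℝ) 1 :=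
    ⟨sum_nonneg fun l _ => hc.1 l, hc.2 ▸
      sum_le_sum_of_subset_of_nonneg (range_subset_range.2 hi) fun l _ _ => hc.1 l⟩
  rw [cdfGap, sum_sub_distrib]
  exact abs_sub_le_of_nonneg_of_le (hcdf hb).1 (hcdf hb).2 (hcdf ha).1 (hcdf ha).2

lemma cdfGap_eq_zero (ha : IsWeight M a) (hb : IsWeight M b)
    (hab : ∀ l ∉ Ico lo hi, a l = b l) {i : ℕ} (hiM : i < M) (hi : i ∉ Ico lo hi) :
    cdfGap a b i = 0 := by
  rcases lt_or_ge i lo with hlo | hlo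
  · refine sum_eq_zero fun l hl => sub_eq_zero.2 (hab l ?_).symm
    simp only [mem_range, mem_Ico] at hl ⊢
    omega
  · have htail : ∑ l ∈ Ico (i + 1) M, (b l - a l) = 0 := by
      refine sum_eq_zero fun l hl => sub_eq_zero.2 (hab l ?_).symm
      simp only [mem_Ico] at hl hi ⊢
      omega
    have hsplit := sum_range_add_sum_Ico (fun l => b l - a l) (show i + 1 ≤ M from hiM)
    rwa [sum_range_sub_eq_zero ha hb, htail, add_zero] at hsplit

lemma sum_abs_cdfGap_le (ha : IsWeight M a) (hb : IsWeight M b)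
    (hab : ∀ l ∉ Ico lo hi, a l = b l) :
    ∑ i ∈ range M, |cdfGap a b i| ≤ (hi - lo : ℕ) := by
  calc ∑ i ∈ range M, |cdfGap a b i| ≤ ∑ i ∈ range M, if i ∈ Ico lo hi then (1 : ℝ) else 0 := by
        refine sum_le_sum fun i hiM => ?_
        split_ifs with hi
        · exact abs_cdfGap_le_one ha hb (mem_range.1 hiM)
        · rw [cdfGap_eq_zero ha hb hab (mem_range.1 hiM) hi, abs_zero]
    _ = #{i ∈ range M | i ∈ Ico lo hi} := sum_boole _ _
    _ ≤ (hi - lo : ℕ) := by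
        rw [← Nat.card_Ico]
        exact_mod_cast card_le_card fun i hi => (mem_filter.1 hi).2

end PathFlow

section DyadicWeight

/-- The uniform weight on the dyadic block of length `2ᵏ` containing `p`. -/
def dyadicWeight (k p i : ℕ) : ℝ := if i / 2 ^ k = p / 2 ^ k then ((2 : ℝ) ^ k)⁻¹ else 0

variable {K k p : ℕ}

lemma dyadicWeight_nonneg (k p i : ℕ) : 0 ≤ dyadicWeight k p i := by
  unfold dyadicWeight
  positivity

lemma dyadicWeight_le (k p i : ℕ) : dyadicWeight k p i ≤ ((2 : ℝ) ^ k)⁻¹ := by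
  unfold dyadicWeight
  split_ifs
  · rfl
  · positivity

lemma dyadicWeight_zero (p i : ℕ) : dyadicWeight 0 p i = if i = p then 1 else 0 := by
  simp [dyadicWeight]

lemma dyadicWeight_top {i : ℕ} (hp : p < 2 ^ K) (hi : i < 2 ^ K) :
    dyadicWeight K p i = ((2 : ℝ) ^ K)⁻¹ := by
  rw [dyadicWeight, Nat.div_eq_of_lt hp, Nat.div_eq_of_lt hi, if_pos rfl]

lemma div_two_pow_eq_iff_mem_Ico (k q i : ℕ) :
    i / 2 ^ k = q ↔ i ∈ Ico (2 ^ k * q) (2 ^ k * q + 2 ^ k) := by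
  rw [Nat.div_eq_iff (by positivity), mem_Ico]
  have : 0 < 2 ^ k := by positivity
  rw [mul_comm]
  omega

lemma isWeight_dyadicWeight (hk : k ≤ K) (hp : p < 2 ^ K) :
    IsWeight (2 ^ K) (dyadicWeight k p) := by
  refine ⟨dyadicWeight_nonneg k p, ?_⟩
  have hblock : Ico (2 ^ k * (p / 2 ^ k)) (2 ^ k * (p / 2 ^ k) + 2 ^ k) ⊆ range (2 ^ K) := by
    intro i hi
    rw [← div_two_pow_eq_iff_mem_Ico] at hi
    have hK : 2 ^ K = 2 ^ k * 2 ^ (K - k) := by rw [← pow_add, Nat.add_sub_cancel' hk]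
    have hdiv : i / 2 ^ K = 0 := by
      rw [hK, ← Nat.div_div_eq_div_mul, hi, Nat.div_div_eq_div_mul, ← hK, Nat.div_eq_of_lt hp]
    exact mem_range.2 (Nat.lt_of_div_eq_zero (by positivity) hdiv)
  simp only [dyadicWeight, div_two_pow_eq_iff_mem_Ico, sum_ite_mem]
  rw [inter_eq_right.2 hblock]
  simp

lemma dyadicWeight_eq_dyadicWeight_succ {l : ℕ}
    (hl : l / 2 ^ (k + 1) ≠ p / 2 ^ (k + 1)) :
    dyadicWeight k p l = dyadicWeight (k + 1) p l := by
  have hl' : l / 2 ^ k ≠ p / 2 ^ k := by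
    contrapose! hl
    rw [pow_succ, ← Nat.div_div_eq_div_mul, hl, Nat.div_div_eq_div_mul]
  rw [dyadicWeight, dyadicWeight, if_neg hl, if_neg hl']

lemma sum_abs_cdfGap_dyadicWeight_le (hk : k < K) (hp : p < 2 ^ K) :
    ∑ i ∈ range (2 ^ K), |cdfGap (dyadicWeight k p) (dyadicWeight (k + 1) p) i| ≤
      2 ^ (k + 1) := by
  refine (sum_abs_cdfGap_le (isWeight_dyadicWeight hk.le hp) (isWeight_dyadicWeight hk hp)
    fun l hl => dyadicWeight_eq_dyadicWeight_succ
      ((div_two_pow_eq_iff_mem_Ico _ _ _).not.2 hl)).trans_eq ?_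
  simp

end DyadicWeight

section GridFlow

/-- The edges leaving the points of the square grid `{0, …, M - 1}²`; `Sum.inl z` is the edge from
`z` to `(z.1 + 1, z.2)` and `Sum.inr z` the edge from `z` to `(z.1, z.2 + 1)`. -/
def gridEdges (M : ℕ) : Finset (ℕ × ℕ ⊕ ℕ × ℕ) :=
  (range M ×ˢ range M).disjSum (range M ×ˢ range M)

/-- The increments of `u` along the edges of the grid `ℕ²`. -/
def gridGrad (u : ℕ × ℕ → ℝ) : ℕ × ℕ ⊕ ℕ × ℕ → ℝ :=
  Sum.elim (fun z => u (z.1 + 1, z.2) - u z) (fun z => u (z.1, z.2 + 1) - u z)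

/-- The flow on the edges of the grid `ℕ²` that moves `a' ⊗ c'` first vertically into `a' ⊗ c` and
then horizontally into `a ⊗ c`. -/
def gridFlow (a a' c c' : ℕ → ℝ) : ℕ × ℕ ⊕ ℕ × ℕ → ℝ :=
  Sum.elim (fun z => cdfGap a a' z.1 * c z.2) (fun z => a' z.1 * cdfGap c c' z.2)

lemma card_gridEdges (M : ℕ) : #(gridEdges M) = 2 * M ^ 2 := by
  simp only [gridEdges, card_disjSum, card_product, card_range]
  ring

variable {M : ℕ} {a a' c c' : ℕ → ℝ}

lemma sum_gridFlow_mul_gridGrad (ha : IsWeight M a) (ha' : IsWeight M a') (hc : IsWeight M c)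
    (hc' : IsWeight M c') (u : ℕ × ℕ → ℝ) :
    ∑ e ∈ gridEdges M, gridFlow a a' c c' e * gridGrad u e =
      ∑ z ∈ range M ×ˢ range M, a z.1 * c z.2 * u z -
        ∑ z ∈ range M ×ˢ range M, a' z.1 * c' z.2 * u z := by
  have hhor : ∑ z ∈ range M ×ˢ range M, cdfGap a a' z.1 * c z.2 * (u (z.1 + 1, z.2) - u z) =
      ∑ z ∈ range M ×ˢ range M, (a z.1 - a' z.1) * c z.2 * u z := by
    simp only [sum_product_right]
    refine sum_congr rfl fun y _ => ?_
    have h := sum_range_sub_mul_eq_sum_cdfGap_mul ha ha' fun i => c y * u (i, y)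
    simp only [mul_assoc, ← mul_sub] at h ⊢
    exact h.symm
  have hver : ∑ z ∈ range M ×ˢ range M, a' z.1 * cdfGap c c' z.2 * (u (z.1, z.2 + 1) - u z) =
      ∑ z ∈ range M ×ˢ range M, a' z.1 * (c z.2 - c' z.2) * u z := by
    simp only [sum_product]
    refine sum_congr rfl fun i _ => ?_
    simp only [mul_assoc, ← mul_sum]
    rw [sum_range_sub_mul_eq_sum_cdfGap_mul hc hc' fun y => u (i, y)]
  simp only [gridEdges, sum_disjSum, gridFlow, gridGrad, Sum.elim_inl, Sum.elim_inr]
  rw [hhor, hver, ← sum_add_distrib, ← sum_sub_distrib]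
  exact sum_congr rfl fun z _ => by ring

lemma sum_abs_gridFlow (hc : IsWeight M c) (ha' : IsWeight M a') :
    ∑ e ∈ gridEdges M, |gridFlow a a' c c' e| =
      ∑ i ∈ range M, |cdfGap a a' i| + ∑ i ∈ range M, |cdfGap c c' i| := by
  simp only [gridEdges, sum_disjSum, gridFlow, Sum.elim_inl, Sum.elim_inr, abs_mul,
    abs_of_nonneg (hc.1 _), abs_of_nonneg (ha'.1 _), sum_product, ← mul_sum, ← sum_mul, hc.2,
    ha'.2, mul_one, one_mul]

lemma abs_gridFlow_le (ha : IsWeight M a) (ha' : IsWeight M a') (hc : IsWeight M c)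
    (hc' : IsWeight M c') {r : ℝ} (hcr : ∀ i, c i ≤ r) (har : ∀ i, a' i ≤ r)
    {e : ℕ × ℕ ⊕ ℕ × ℕ} (he : e ∈ gridEdges M) : |gridFlow a a' c c' e| ≤ r := by
  rcases e with z | z <;>
    simp only [gridEdges, inl_mem_disjSum, inr_mem_disjSum, mem_product, mem_range] at he
  · rw [gridFlow, Sum.elim_inl, abs_mul, abs_of_nonneg (hc.1 _)]
    exact (mul_le_of_le_one_left (hc.1 _) (abs_cdfGap_le_one ha ha' he.1)).trans (hcr _)
  · rw [gridFlow, Sum.elim_inr, abs_mul, abs_of_nonneg (ha'.1 _)]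
    exact (mul_le_of_le_one_right (ha'.1 _) (abs_cdfGap_le_one hc hc' he.2)).trans (har _)

end GridFlow

section SpreadFlow

/-- The flow moving the uniform weight on the dyadic square of side `2ᵏ⁺¹` containing `z` into the
uniform weight on the one of side `2ᵏ`. -/
def levelFlow (k : ℕ) (z : ℕ × ℕ) : ℕ × ℕ ⊕ ℕ × ℕ → ℝ :=
  gridFlow (dyadicWeight k z.1) (dyadicWeight (k + 1) z.1)
    (dyadicWeight k z.2) (dyadicWeight (k + 1) z.2)

/-- The multi-scale flow concentrating the uniform weight on the dyadic square of side `2ᴷ`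
containing `z` at the point `z`. -/
def spreadFlow (K : ℕ) (z : ℕ × ℕ) (e : ℕ × ℕ ⊕ ℕ × ℕ) : ℝ := ∑ k ∈ range K, levelFlow k z e

variable {K k : ℕ} {z : ℕ × ℕ}

lemma mem_range_product_range_iff {M : ℕ} : z ∈ range M ×ˢ range M ↔ z.1 < M ∧ z.2 < M := by
  rw [mem_product, mem_range, mem_range]

lemma sum_abs_levelFlow_le (hk : k < K) (hz : z ∈ range (2 ^ K) ×ˢ range (2 ^ K)) :
    ∑ e ∈ gridEdges (2 ^ K), |levelFlow k z e| ≤ 4 * 2 ^ k := by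
  obtain ⟨hz1, hz2⟩ := mem_range_product_range_iff.1 hz
  rw [levelFlow, sum_abs_gridFlow (isWeight_dyadicWeight hk.le hz2) (isWeight_dyadicWeight hk hz1)]
  have h1 := sum_abs_cdfGap_dyadicWeight_le hk hz1
  have h2 := sum_abs_cdfGap_dyadicWeight_le hk hz2
  rw [pow_succ] at h1 h2
  linarith

lemma abs_levelFlow_le (hk : k < K) (hz : z ∈ range (2 ^ K) ×ˢ range (2 ^ K))
    {e : ℕ × ℕ ⊕ ℕ × ℕ} (he : e ∈ gridEdges (2 ^ K)) : |levelFlow k z e| ≤ 1 / 2 ^ k := by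
  obtain ⟨hz1, hz2⟩ := mem_range_product_range_iff.1 hz
  have hsucc : ((2 : ℝ) ^ (k + 1))⁻¹ ≤ (2 ^ k)⁻¹ := by gcongr <;> simp
  rw [one_div]
  exact abs_gridFlow_le (isWeight_dyadicWeight hk.le hz1) (isWeight_dyadicWeight hk hz1)
    (isWeight_dyadicWeight hk.le hz2) (isWeight_dyadicWeight hk hz2) (dyadicWeight_le k z.2)
    (fun i => (dyadicWeight_le (k + 1) z.1 i).trans hsucc) he

lemma sum_abs_sum_range_le {β : Type*} {s : Finset β} {t : ℕ → β → ℝ} {A : ℝ} (hA : 0 ≤ A)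
    (hsum : ∀ k < K, ∑ e ∈ s, |t k e| ≤ A * 2 ^ k) :
    ∑ e ∈ s, |∑ k ∈ range K, t k e| ≤ A * 2 ^ K := by
  calc ∑ e ∈ s, |∑ k ∈ range K, t k e| ≤ ∑ e ∈ s, ∑ k ∈ range K, |t k e| :=
        sum_le_sum fun e _ => abs_sum_le_sum_abs _ _
    _ ≤ ∑ k ∈ range K, A * 2 ^ k := by
        rw [sum_comm]
        exact sum_le_sum fun k hk => hsum k (mem_range.1 hk)
    _ ≤ A * 2 ^ K := by
        rw [← mul_sum]
        gcongr
        linarith [geom_sum_mul (2 : ℝ) K]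

-- The sup norms decay as fast as the `ℓ¹` norms grow, so each level adds a bounded energy.
lemma sum_sq_sum_range_le {β : Type*} {s : Finset β} {t : ℕ → β → ℝ} {A B : ℝ} (hA : 0 ≤ A)
    (hB : 0 ≤ B) (hsum : ∀ k < K, ∑ e ∈ s, |t k e| ≤ A * 2 ^ k)
    (hsup : ∀ k < K, ∀ e ∈ s, |t k e| ≤ B / 2 ^ k) :
    ∑ e ∈ s, (∑ k ∈ range K, t k e) ^ 2 ≤ 3 * A * B * K := by
  induction K with
  | zero => simp
  | succ K ih =>
    have hprev := ih (fun k hk => hsum k (by omega)) fun k hk => hsup k (by omega)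
    set T : β → ℝ := fun e => ∑ k ∈ range K, t k e
    have hT : ∑ e ∈ s, |T e| ≤ A * 2 ^ K := sum_abs_sum_range_le hA fun k hk => hsum k (by omega)
    have hstep (e : β) (he : e ∈ s) :
        (T e + t K e) ^ 2 ≤ T e ^ 2 + (2 * |T e| + |t K e|) * (B / 2 ^ K) := by
      calc (T e + t K e) ^ 2 = T e ^ 2 + (2 * T e + t K e) * t K e := by ring
        _ ≤ T e ^ 2 + (2 * |T e| + |t K e|) * |t K e| := by
            refine add_le_add_right ((le_abs_self _).trans ((abs_mul _ _).trans_le ?_)) _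
            refine mul_le_mul_of_nonneg_right ?_ (abs_nonneg _)
            exact (abs_add_le _ _).trans_eq (by rw [abs_mul, abs_two])
        _ ≤ T e ^ 2 + (2 * |T e| + |t K e|) * (B / 2 ^ K) := by
            gcongr
            exact hsup K K.lt_succ_self e he
    calc ∑ e ∈ s, (∑ k ∈ range (K + 1), t k e) ^ 2 = ∑ e ∈ s, (T e + t K e) ^ 2 := by
          simp only [sum_range_succ, T]
      _ ≤ ∑ e ∈ s, (T e ^ 2 + (2 * |T e| + |t K e|) * (B / 2 ^ K)) := sum_le_sum hstep
      _ = ∑ e ∈ s, T e ^ 2 + (2 * ∑ e ∈ s, |T e| + ∑ e ∈ s, |t K e|) * (B / 2 ^ K) := by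
          rw [sum_add_distrib, ← sum_mul, sum_add_distrib, mul_sum]
      _ ≤ 3 * A * B * K + (2 * (A * 2 ^ K) + A * 2 ^ K) * (B / 2 ^ K) := by
          gcongr
          exact hsum K K.lt_succ_self
      _ = 3 * A * B * (K + 1 : ℕ) := by
          push_cast
          field_simp
          ring

lemma sum_sq_spreadFlow_le (hz : z ∈ range (2 ^ K) ×ˢ range (2 ^ K)) :
    ∑ e ∈ gridEdges (2 ^ K), spreadFlow K z e ^ 2 ≤ 12 * K := by
  refine (sum_sq_sum_range_le (A := 4) (B := 1) (by norm_num) zero_le_one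
    (fun k hk => sum_abs_levelFlow_le hk hz) fun k hk e he => abs_levelFlow_le hk hz he).trans_eq ?_
  norm_num

/-- The average of `u` over the dyadic square of side `2ᵏ` containing `z`, inside the grid
`{0, …, 2ᴷ - 1}²`. -/
def squareAvg (K k : ℕ) (u : ℕ × ℕ → ℝ) (z : ℕ × ℕ) : ℝ :=
  ∑ w ∈ range (2 ^ K) ×ˢ range (2 ^ K), dyadicWeight k z.1 w.1 * dyadicWeight k z.2 w.2 * u w

lemma squareAvg_zero (u : ℕ × ℕ → ℝ) (hz : z ∈ range (2 ^ K) ×ˢ range (2 ^ K)) :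
    squareAvg K 0 u z = u z := by
  rw [squareAvg, sum_eq_single_of_mem z hz fun w _ hw => ?_]
  · simp [dyadicWeight_zero]
  · simp only [dyadicWeight_zero]
    grind

lemma squareAvg_top (u : ℕ × ℕ → ℝ) (hz : z ∈ range (2 ^ K) ×ˢ range (2 ^ K)) :
    squareAvg K K u z =
      ∑ w ∈ range (2 ^ K) ×ˢ range (2 ^ K), ((2 : ℝ) ^ K)⁻¹ * (2 ^ K)⁻¹ * u w := by
  obtain ⟨hz1, hz2⟩ := mem_range_product_range_iff.1 hz
  refine sum_congr rfl fun w hw => ?_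
  obtain ⟨hw1, hw2⟩ := mem_range_product_range_iff.1 hw
  rw [dyadicWeight_top hz1 hw1, dyadicWeight_top hz2 hw2]

lemma squareAvg_top_add_sum_gridGrad_mul_spreadFlow (u : ℕ × ℕ → ℝ)
    (hz : z ∈ range (2 ^ K) ×ˢ range (2 ^ K)) :
    squareAvg K K u z + ∑ e ∈ gridEdges (2 ^ K), gridGrad u e * spreadFlow K z e = u z := by
  obtain ⟨hz1, hz2⟩ := mem_range_product_range_iff.1 hz
  have hlevel (k : ℕ) (hk : k ∈ range K) :
      ∑ e ∈ gridEdges (2 ^ K), gridGrad u e * levelFlow k z e =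
        squareAvg K k u z - squareAvg K (k + 1) u z := by
    have hk := mem_range.1 hk
    simp only [mul_comm (gridGrad u _), levelFlow]
    exact sum_gridFlow_mul_gridGrad (isWeight_dyadicWeight hk.le hz1)
      (isWeight_dyadicWeight hk hz1) (isWeight_dyadicWeight hk.le hz2)
      (isWeight_dyadicWeight hk hz2) u
  simp only [spreadFlow, mul_sum]
  rw [sum_comm, sum_congr rfl hlevel, sum_range_sub', squareAvg_zero u hz, add_sub_cancel]

end SpreadFlow

section DimensionTwo

variable {N n : ℕ} {x : Fin N → (Fin 2 → ℝ)}

lemma abs_gridGrad_cellCenter_le {f : (Fin 2 → ℝ) → ℝ} (hf : IsCostLipschitz euclidDist f)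
    (K : ℕ) (e : ℕ × ℕ ⊕ ℕ × ℕ) :
    |gridGrad (fun w => f (cellCenter K ![w.1, w.2])) e| ≤ (1 / 2) ^ K := by
  rcases e with z | z <;> simp only [gridGrad, Sum.elim_inl, Sum.elim_inr] <;>
    refine (abs_sub_le_of_isCostLipschitz hf _ _).trans ?_ <;>
    refine Real.sqrt_le_iff.2 ⟨by positivity, le_of_eq ?_⟩ <;>
    simp only [Fin.sum_univ_two, cellCenter, Matrix.cons_val_zero, Matrix.cons_val_one] <;>
    rw [one_div_pow] <;> push_cast <;> field_simp <;> ring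

theorem expectedW1_le_of_spreadFlow (hn : 1 ≤ n) (hnN : n ≤ N)
    (hx : ∀ j i, x j i ∈ Set.Icc (0 : ℝ) 1) (K : ℕ) :
    expectedW1 n x ≤ ENNReal.ofReal (√2 * (1 / 2) ^ K + √(24 * K / n)) := by
  have : NeZero N := ⟨by omega⟩
  let Q (j : Fin N) : ℕ × ℕ := (cellIdx K (x j 0), cellIdx K (x j 1))
  have hQ (j : Fin N) : Q j ∈ range (2 ^ K) ×ˢ range (2 ^ K) :=
    mem_range_product_range_iff.2 ⟨cellIdx_lt _ _, cellIdx_lt _ _⟩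
  have hcell (j : Fin N) : ![(Q j).1, (Q j).2] = cell K (x j) := by
    ext i
    fin_cases i <;> rfl
  refine (expectedW1_le_of_features (s := gridEdges (2 ^ K)) (θ := fun e j => spreadFlow K (Q j) e)
    (b := fun _ => (1 / 2) ^ K) (ε := √2 * (1 / 2) ^ (K + 1)) hn hnN (by positivity)
    (fun e _ => by positivity) fun f hf => ?_).trans (ENNReal.ofReal_le_ofReal ?_)
  · let u (w : ℕ × ℕ) : ℝ := f (cellCenter K ![w.1, w.2])
    refine ⟨∑ w ∈ range (2 ^ K) ×ˢ range (2 ^ K), (2 ^ K)⁻¹ * (2 ^ K)⁻¹ * u w, gridGrad u,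
      fun e _ => abs_gridGrad_cellCenter_le hf K e, fun j => ?_⟩
    rw [← squareAvg_top u (hQ j), squareAvg_top_add_sum_gridGrad_mul_spreadFlow u (hQ j)]
    simp only [u, hcell]
    exact (abs_sub_le_of_isCostLipschitz hf _ _).trans
      (mod_cast euclidDist_cellCenter_cell_le K (hx j))
  · have henergy := sum_sqrt_expect_sq_div_le (θ := fun e j => spreadFlow K (Q j) e)
      n.cast_nonneg fun j => sum_sq_spreadFlow_le (hQ j)
    have hscale : (1 / 2 : ℝ) ^ K * √(#(gridEdges (2 ^ K)) * (12 * K) / n) = √(24 * K / n) := by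
      rw [card_gridEdges, ← Real.sqrt_sq (by positivity : (0 : ℝ) ≤ (1 / 2) ^ K),
        ← Real.sqrt_mul (by positivity)]
      congr 1
      rw [one_div_pow]
      push_cast
      field_simp
      ring
    rw [← mul_sum, ← hscale]
    exact add_le_add (le_of_eq (by ring)) (mul_le_mul_of_nonneg_left henergy (by positivity))

lemma natLog_two_add_one_le (hn : 1 ≤ n) :
    ((Nat.log 2 n + 1 : ℕ) : ℝ) ≤ 3 / 2 * (1 + Real.log (2 * n)) := by
  have hn0 : (0 : ℝ) < n := by positivity
  have hpow : (2 : ℝ) ^ Nat.log 2 n ≤ n := mod_cast Nat.pow_log_le_self 2 (by omega)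
  have hlog : Nat.log 2 n * Real.log 2 ≤ Real.log n := by
    rw [← Real.log_pow]
    exact Real.log_le_log (by positivity) hpow
  rw [Real.log_mul two_ne_zero hn0.ne']
  push_cast
  nlinarith [Real.log_two_gt_d9, (Nat.log 2 n).cast_nonneg (α := ℝ)]

lemma one_half_pow_natLog_two_add_one_le (hn : 1 ≤ n) :
    (1 / 2 : ℝ) ^ (Nat.log 2 n + 1) ≤ √((1 + Real.log (2 * n)) / n) := by
  have hn1 : (1 : ℝ) ≤ n := mod_cast hn
  have hlog : 0 ≤ Real.log (2 * n) := Real.log_nonneg (by linarith)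
  have hpow : (n : ℝ) ≤ 2 ^ (Nat.log 2 n + 1) := mod_cast (Nat.lt_pow_succ_log_self one_lt_two n).le
  calc (1 / 2 : ℝ) ^ (Nat.log 2 n + 1) = 1 / 2 ^ (Nat.log 2 n + 1) := one_div_pow _ _
    _ ≤ 1 / n := one_div_le_one_div_of_le (by positivity) hpow
    _ ≤ √(1 / n) := Real.le_sqrt_of_sq_le (pow_le_of_le_one (by positivity)
        ((div_le_one₀ (by positivity)).2 hn1) two_ne_zero)
    _ ≤ √((1 + Real.log (2 * n)) / n) := by gcongr; linarith

-- `24 · 3/2 = 36`, so the two terms contribute `√2 ≤ 2` and `6`.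
theorem expectedW1_le_of_dim_two (hn : 1 ≤ n) (hnN : n ≤ N)
    (hx : ∀ j i, x j i ∈ Set.Icc (0 : ℝ) 1) :
    expectedW1 n x ≤ ENNReal.ofReal (8 * √((1 + Real.log (2 * n)) / n)) := by
  refine (expectedW1_le_of_spreadFlow hn hnN hx (Nat.log 2 n + 1)).trans
    (ENNReal.ofReal_le_ofReal ?_)
  set X := (1 + Real.log (2 * n)) / n with hX
  have hsqrt2 : √2 ≤ 2 := Real.sqrt_le_iff.2 (by norm_num)
  have hmesh : √2 * (1 / 2) ^ (Nat.log 2 n + 1) ≤ 2 * √X :=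
    mul_le_mul hsqrt2 (one_half_pow_natLog_two_add_one_le hn) (by positivity) zero_le_two
  have henergy : √(24 * (Nat.log 2 n + 1 : ℕ) / n) ≤ 6 * √X := by
    calc √(24 * (Nat.log 2 n + 1 : ℕ) / n) ≤ √(6 ^ 2 * X) := by
          rw [hX, ← mul_div_assoc]
          refine Real.sqrt_le_sqrt (div_le_div_of_nonneg_right ?_ n.cast_nonneg)
          linarith [natLog_two_add_one_le hn]
      _ = 6 * √X := by rw [Real.sqrt_mul (by norm_num), Real.sqrt_sq (by norm_num)]
  linarith

end DimensionTwo

/-- Corollary 5: concentration of the empirical measures `μ_τ` over uniformly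
random `n`-element subsets `τ` around the average measure `μ`. -/
theorem expected_W1_empOfSubset {d N n : ℕ} (hN : 2 ≤ N) (hn1 : 1 ≤ n) (hnN : n ≤ N)
    (x : Fin N → (Fin d → ℝ)) (hx : ∀ j i, x j i ∈ Set.Icc (0 : ℝ) 1) :
    (d = 1 →
      (∑ τ ∈ subsetsCard N n, W1 (empOfSubset n x τ) (avgMeasure x)) /
          ((subsetsCard N n).card : ℝ≥0∞)
        ≤ ENNReal.ofReal (Real.sqrt (2 / n))) ∧
    (d = 2 →
      (∑ τ ∈ subsetsCard N n, W1 (empOfSubset n x τ) (avgMeasure x)) /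
          ((subsetsCard N n).card : ℝ≥0∞)
        ≤ ENNReal.ofReal (8 * Real.sqrt ((1 + Real.log (2 * n)) / n))) ∧
    (3 ≤ d →
      (∑ τ ∈ subsetsCard N n, W1 (empOfSubset n x τ) (avgMeasure x)) /
          ((subsetsCard N n).card : ℝ≥0∞)
        ≤ ENNReal.ofReal (13 * Real.sqrt d / (n : ℝ) ^ (1 / d : ℝ))) := by
  refine ⟨?_, ?_, fun hd => expectedW1_le_of_three_le_dim hn1 hnN hd hx⟩
  · rintro rfl
    exact expectedW1_le_of_dim_one hn1 hnN hx
  · rintro rfl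
    exact expectedW1_le_of_dim_two hn1 hnN hx
end
end
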